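/- arXiv:1306.4791 — 4 statements merged into one kernel-verified Lean document; each statement's English description precedes it below -/
import Mathlib

section
/- Let L be a field of characteristic p > 0 and n ≥ 1. Let f_1, …, f_{n−1} ∈ L(x_1, …, x_n) be p-independent over the subfield M = L(x_1^p, …, x_n^p). Let d be an L-derivation of L(x_1, …, x_n) such that d(f_1) = ⋯ = d(f_{n−1}) = 0. Then there exists c ∈ L(x_1, …, x_n) such that d = c·d_F, where F = (f_1, …, f_{n−1}). -/
open MvPolynomial

/-!
Let `M = L(Fᵖ)`, which is `L(x₁ᵖ, …, xₙᵖ)` when `F = L(x₁, …, xₙ)`. Then `[F : M] ≤ pⁿ`, while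
`p`-independence gives `[M(f) : M] ≥ pⁿ⁻¹`, so `[F : M(f)] ≤ p`; as `Fᵖ ⊆ M`, this forces
`F = M(f, t)` for some `t`. An `L`-derivation of `F` kills `Fᵖ`, hence is determined by its values
at `f` and `t`.

Let `J = d_F`. A nonzero `v` in the kernel of the Jacobian matrix of `(f, t)` would give a
derivation `∑ vⱼ ∂ⱼ` killing `f` and `t`, hence zero, although it maps `xⱼ` to `vⱼ`. So `J t ≠ 0`,
and `d` and `(d t / J t) • J` agree on `f`, where both vanish, and on `t`.
-/

section Degree

open Module IntermediateField

variable {K F : Type*} [Field K] [Field F] [Algebra K F]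

theorem isIntegral_of_pow_mem_range {n : ℕ} (hn : n ≠ 0) {a : F}
    (ha : a ^ n ∈ (algebraMap K F).range) : IsIntegral K a := by
  obtain ⟨b, hb⟩ := ha
  exact IsIntegral.of_pow hn.pos (hb ▸ isIntegral_algebraMap)

theorem finrank_adjoin_simple_le_of_pow_mem_range {n : ℕ} (hn : n ≠ 0) {a : F}
    (ha : a ^ n ∈ (algebraMap K F).range) : finrank K K⟮a⟯ ≤ n := by
  rw [adjoin.finrank (isIntegral_of_pow_mem_range hn ha)]
  obtain ⟨b, hb⟩ := ha
  have hroot : Polynomial.aeval a (Polynomial.X ^ n - Polynomial.C b) = 0 := by simp [hb]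
  calc (minpoly K a).natDegree
      ≤ (Polynomial.X ^ n - Polynomial.C b).natDegree :=
        Polynomial.natDegree_le_of_dvd (minpoly.dvd K a hroot)
          (Polynomial.X_pow_sub_C_ne_zero hn.pos b)
    _ = n := Polynomial.natDegree_X_pow_sub_C

theorem finrank_adjoin_le_pow_card {n : ℕ} (hn : n ≠ 0) (s : Finset F)
    (hs : ∀ a ∈ s, a ^ n ∈ (algebraMap K F).range) :
    finrank K (adjoin K (s : Set F)) ≤ n ^ s.card := by
  classical
  induction s using Finset.induction_on with
  | empty =>
    rw [Finset.coe_empty, adjoin_empty, IntermediateField.finrank_bot, Finset.card_empty, pow_zero]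
  | insert a s has ih =>
    rw [Finset.forall_mem_insert] at hs
    rw [Finset.coe_insert, Set.insert_eq, adjoin_union, Finset.card_insert_of_notMem has, pow_succ']
    exact (finrank_sup_le _ _).trans
      (Nat.mul_le_mul (finrank_adjoin_simple_le_of_pow_mem_range hn hs.1) (ih hs.2))

theorem finiteDimensional_of_adjoin_range_eq_top {ι : Type*} [Finite ι] {n : ℕ} (hn : n ≠ 0)
    {x : ι → F} (hx : adjoin K (Set.range x) = ⊤)
    (hxn : ∀ i, x i ^ n ∈ (algebraMap K F).range) : FiniteDimensional K F := by
  have : FiniteDimensional K (adjoin K (Set.range x)) :=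
    finiteDimensional_adjoin <|
      Set.forall_mem_range.2 fun i => isIntegral_of_pow_mem_range hn (hxn i)
  rw [hx] at this
  exact topEquiv.toLinearEquiv.finiteDimensional

theorem finrank_le_pow_card_of_adjoin_range_eq_top {ι : Type*} [Fintype ι] {n : ℕ} (hn : n ≠ 0)
    {x : ι → F} (hx : adjoin K (Set.range x) = ⊤)
    (hxn : ∀ i, x i ^ n ∈ (algebraMap K F).range) : finrank K F ≤ n ^ Fintype.card ι := by
  classical
  have himage : (Finset.univ.image x : Set F) = Set.range x := by simp
  calc finrank K F = finrank K (adjoin K (Finset.univ.image x : Set F)) := by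
        rw [himage, hx, finrank_top']
    _ ≤ n ^ (Finset.univ.image x).card := finrank_adjoin_le_pow_card hn _ (by simpa using hxn)
    _ ≤ n ^ Fintype.card ι := Nat.pow_le_pow_right hn.pos Finset.card_image_le

theorem pow_card_le_finrank_adjoin_range {ι : Type*} [Fintype ι] {n : ℕ} {f : ι → F}
    [FiniteDimensional K (adjoin K (Set.range f))]
    (hf : LinearIndependent K fun e : ι → Fin n => ∏ i, f i ^ (e i : ℕ)) :
    n ^ Fintype.card ι ≤ finrank K (adjoin K (Set.range f)) := by
  classical
  let monomial (e : ι → Fin n) : adjoin K (Set.range f) :=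
    ∏ i, ⟨f i, subset_adjoin K _ (Set.mem_range_self i)⟩ ^ (e i : ℕ)
  have hmonomial : LinearIndependent K monomial :=
    LinearIndependent.of_comp (adjoin K (Set.range f)).val.toLinearMap <| by
      simpa [Function.comp_def, monomial] using hf
  simpa using hmonomial.fintype_card_le_finrank

variable {p : ℕ} [Fact p.Prime] [CharP F p]

theorem finrank_adjoin_simple_eq_of_pow_mem_range {a : F} (ha : a ∉ (algebraMap K F).range)
    (hap : a ^ p ∈ (algebraMap K F).range) : finrank K K⟮a⟯ = p := by
  have hp : p.Prime := Fact.out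
  rw [adjoin.finrank (isIntegral_of_pow_mem_range hp.ne_zero hap)]
  obtain ⟨b, hb⟩ := hap
  have hirr : Irreducible (Polynomial.X ^ p - Polynomial.C b) :=
    X_pow_sub_C_irreducible_of_prime hp fun c hc =>
      ha ⟨c, frobenius_inj F p (by simp only [frobenius_def, ← hb, ← hc, map_pow])⟩
  rw [← minpoly.eq_of_irreducible_of_monic hirr (by simp [hb])
    (Polynomial.monic_X_pow_sub_C b hp.ne_zero), Polynomial.natDegree_X_pow_sub_C]

theorem exists_adjoin_simple_eq_top_of_finrank_le [FiniteDimensional K F]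
    (hpow : ∀ a : F, a ^ p ∈ (algebraMap K F).range) (hle : finrank K F ≤ p) :
    ∃ t : F, K⟮t⟯ = ⊤ := by
  by_cases hsurj : ∀ t : F, t ∈ (algebraMap K F).range
  · refine ⟨0, ?_⟩
    rw [adjoin_zero, eq_top_iff]
    exact fun a _ => mem_bot.2 (hsurj a)
  · push Not at hsurj
    obtain ⟨t, ht⟩ := hsurj
    refine ⟨t, eq_of_le_of_finrank_le le_top ?_⟩
    rwa [finrank_top', finrank_adjoin_simple_eq_of_pow_mem_range ht (hpow t)]

theorem exists_adjoin_range_union_singleton_eq_top [FiniteDimensional K F]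
    (hpow : ∀ a : F, a ^ p ∈ (algebraMap K F).range) {ι : Type*} [Fintype ι]
    (hle : finrank K F ≤ p ^ (Fintype.card ι + 1)) {f : ι → F}
    (hf : LinearIndependent K fun e : ι → Fin p => ∏ i, f i ^ (e i : ℕ)) :
    ∃ t : F, adjoin K (Set.range f ∪ {t}) = ⊤ := by
  have hdegree : finrank (adjoin K (Set.range f)) F ≤ p := by
    refine Nat.le_of_mul_le_mul_left ?_ (pow_pos (Fact.out : p.Prime).pos (Fintype.card ι))
    calc p ^ Fintype.card ι * finrank (adjoin K (Set.range f)) F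
        ≤ finrank K (adjoin K (Set.range f)) * finrank (adjoin K (Set.range f)) F :=
          Nat.mul_le_mul_right _ (pow_card_le_finrank_adjoin_range hf)
      _ = finrank K F := finrank_mul_finrank K _ F
      _ ≤ p ^ Fintype.card ι * p := hle
  have hpow' (a : F) : a ^ p ∈ (algebraMap (adjoin K (Set.range f)) F).range := by
    obtain ⟨b, hb⟩ := hpow a
    exact ⟨algebraMap K _ b, hb⟩
  obtain ⟨t, ht⟩ := exists_adjoin_simple_eq_top_of_finrank_le hpow' hdegree
  exact ⟨t, by rw [← adjoin_adjoin_left, ht, restrictScalars_top]⟩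

end Degree

section Generators

open IntermediateField

variable {L F : Type*} [Field L] [Field F] [Algebra L F]

theorem adjoin_algebraMap_image_eq_top {A : Type*} [CommRing A] [Algebra L A] [Algebra A F]
    [IsFractionRing A F] [IsScalarTower L A F] {s : Set A} (hs : Algebra.adjoin L s = ⊤) :
    adjoin L (algebraMap A F '' s) = ⊤ := by
  have hA (q : A) : algebraMap A F q ∈ adjoin L (algebraMap A F '' s) := by
    have hle : Algebra.adjoin L s ≤ (adjoin L (algebraMap A F '' s)).toSubalgebra.comap
        (IsScalarTower.toAlgHom L A F) :=
      Algebra.adjoin_le fun a ha => subset_adjoin L _ (Set.mem_image_of_mem _ ha)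
    exact hle (hs ▸ Algebra.mem_top)
  refine eq_top_iff.2 fun a _ => ?_
  obtain ⟨q, r, -, rfl⟩ := IsFractionRing.div_surjective (A := A) a
  exact div_mem (hA q) (hA r)

theorem adjoin_range_algebraMap_X_eq_top {σ : Type*} [Algebra (MvPolynomial σ L) F]
    [IsFractionRing (MvPolynomial σ L) F] [IsScalarTower L (MvPolynomial σ L) F] :
    adjoin L (Set.range fun i : σ => algebraMap (MvPolynomial σ L) F (X i)) = ⊤ := by
  rw [Set.range_comp' (algebraMap (MvPolynomial σ L) F) X]
  exact adjoin_algebraMap_image_eq_top adjoin_range_X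

theorem derivation_ext_of_adjoin_eq_top {V : Type*} [AddCommGroup V] [Module L V] [Module F V]
    {D₁ D₂ : Derivation L F V} (s : Set F) (hs : adjoin L s = ⊤) (h : Set.EqOn D₁ D₂ s) :
    D₁ = D₂ := by
  ext a
  induction (hs ▸ mem_top : a ∈ adjoin L s) using adjoin_induction with
  | mem b hb => exact h hb
  | algebraMap b => simp
  | add b c _ _ hb hc => simp [hb, hc]
  | inv b _ hb => simp [Derivation.leibniz_inv, hb]
  | mul b c _ _ hb hc => simp [hb, hc]

variable (L F) in
/-- The intermediate field `L(Fᵖ)`, over which every `L`-derivation of `F` in characteristic `p` is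
linear. For `F = L(x₁, …, xₙ)` it is the field `M = L(x₁ᵖ, …, xₙᵖ)` of the paper. -/
def pPowerField (p : ℕ) : IntermediateField L F :=
  adjoin L (Set.range fun a : F => a ^ p)

theorem pow_mem_range_algebraMap_pPowerField (p : ℕ) (a : F) :
    a ^ p ∈ (algebraMap (pPowerField L F p) F).range :=
  ⟨⟨a ^ p, subset_adjoin L _ ⟨a, rfl⟩⟩, rfl⟩

theorem adjoin_range_pow_eq_pPowerField (p : ℕ) [Fact p.Prime] [CharP F p] {ι : Type*} {x : ι → F}
    (hx : adjoin L (Set.range x) = ⊤) :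
    adjoin L (Set.range fun i => x i ^ p) = pPowerField L F p := by
  refine le_antisymm (adjoin.mono _ _ _ (Set.range_subset_iff.2 fun i => ⟨x i, rfl⟩))
    (adjoin_le_iff.2 (Set.range_subset_iff.2 fun a => ?_))
  have hpreimage : (adjoin L (Set.range x)).toSubfield ≤
      (adjoin L (Set.range fun i => x i ^ p)).toSubfield.comap (frobenius F p) :=
    adjoin_le_subfield L _
      (Set.range_subset_iff.2 fun b =>
        Subfield.mem_comap.2 (pow_mem (IntermediateField.algebraMap_mem _ b) p))
      (Set.range_subset_iff.2 fun i => subset_adjoin L _ ⟨i, rfl⟩)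
  exact hpreimage (hx ▸ mem_top : a ∈ adjoin L (Set.range x))

theorem derivation_ext_of_adjoin_pPowerField_eq_top (p : ℕ) [CharP F p] {V : Type*}
    [AddCommGroup V] [Module L V] [Module F V] {D₁ D₂ : Derivation L F V} (s : Set F)
    (hs : adjoin (pPowerField L F p) s = ⊤) (h : Set.EqOn D₁ D₂ s) : D₁ = D₂ := by
  refine derivation_ext_of_adjoin_eq_top ((Set.range fun a : F => a ^ p) ∪ s) ?_ ?_
  · rw [← adjoin_adjoin_left]
    exact restrictScalars_eq_top_iff.2 hs
  · rintro _ (⟨a, rfl⟩ | ha)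
    · simp [Derivation.leibniz_pow, ← Nat.cast_smul_eq_nsmul F]
    · exact h ha

end Generators

section JacobianDerivation

variable {R A : Type*} [CommSemiring R] [CommRing A] [Algebra R A]

/-- The gradient `a ↦ (δᵢ a)ᵢ` of a family of derivations, as a derivation with values in a power
of the module, so that composing it with a linear form gives a derivation again. -/
def derivationPi {ι V : Type*} [AddCommGroup V] [Module R V] [Module A V]
    (δ : ι → Derivation R A V) : Derivation R A (ι → V) :=
  Derivation.mk' (LinearMap.pi fun i => (δ i : A →ₗ[R] V)) fun a b => by
    ext i
    simp

/-- The Jacobian derivation `d_F` of `F = (f₁, …, fₘ)` with respect to `m + 1` derivations `δ`: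
the determinant, as a linear form in its last row, applied to the gradient. -/
def jacobianDerivation {m : ℕ} (δ : Fin (m + 1) → Derivation R A A) (f : Fin m → A) :
    Derivation R A A :=
  (Matrix.detRowAlternating.toMultilinearMap.curryRight fun a => derivationPi δ (f a)).compDer
    (derivationPi δ)

theorem jacobianDerivation_apply {m : ℕ} (δ : Fin (m + 1) → Derivation R A A) (f : Fin m → A)
    (g : A) : jacobianDerivation δ f g =
      Matrix.det (Matrix.of fun i j => δ j ((Fin.snoc f g : Fin (m + 1) → A) i)) :=
  congrArg Matrix.det (Fin.comp_snoc (derivationPi δ) f g).symm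

theorem jacobianDerivation_apply_self {m : ℕ} (δ : Fin (m + 1) → Derivation R A A) (f : Fin m → A)
    (i : Fin m) : jacobianDerivation δ f (f i) = 0 := by
  rw [jacobianDerivation_apply]
  exact Matrix.det_zero_of_row_eq (Fin.castSucc_lt_last i).ne (by simp [funext_iff])

theorem det_derivation_apply_ne_zero [IsDomain A] {ι : Type*} [Fintype ι] [DecidableEq ι]
    {δ : ι → Derivation R A A} {x : ι → A} (hδ : ∀ i j, δ i (x j) = if i = j then 1 else 0)
    {y : ι → A} (hy : ∀ D : Derivation R A A, (∀ i, D (y i) = 0) → D = 0) :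
    Matrix.det (Matrix.of fun i j => δ j (y i)) ≠ 0 := by
  intro hdet
  obtain ⟨v, hv, hker⟩ := Matrix.exists_mulVec_eq_zero_iff.2 hdet
  let D : Derivation R A A := (dotProductBilin A A v).compDer (derivationPi δ)
  have hD (a : A) : D a = ∑ j, v j * δ j a := rfl
  have hD_zero : D = 0 := hy D fun i => by
    simpa [hD, Matrix.mulVec, dotProduct, mul_comm] using congrFun hker i
  refine hv (funext fun j => ?_)
  simpa [hD, hδ] using DFunLike.congr_fun hD_zero (x j)

end JacobianDerivation

theorem lemma1_jacobian_factorization_general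
    {L F : Type*} [Field L] [Field F] [Algebra L F] (p : ℕ) [Fact p.Prime] [CharP F p] {m : ℕ}
    (x : Fin (m + 1) → F) (hx : IntermediateField.adjoin (pPowerField L F p) (Set.range x) = ⊤)
    (δ : Fin (m + 1) → Derivation L F F) (hδ : ∀ i j, δ i (x j) = if i = j then 1 else 0)
    (f : Fin m → F)
    (hind : LinearIndependent (pPowerField L F p)
      (fun e : Fin m → Fin p => ∏ i, f i ^ (e i : ℕ)))
    (d : Derivation L F F) (hd : ∀ i, d (f i) = 0) :
    ∃ c : F, d = c • jacobianDerivation δ f := by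
  have hp : p ≠ 0 := (Fact.out : p.Prime).ne_zero
  have hpow := pow_mem_range_algebraMap_pPowerField (L := L) (F := F) p
  have := finiteDimensional_of_adjoin_range_eq_top hp hx fun i => hpow (x i)
  obtain ⟨t, ht⟩ := exists_adjoin_range_union_singleton_eq_top hpow
    (by simpa using finrank_le_pow_card_of_adjoin_range_eq_top hp hx fun i => hpow (x i)) hind
  have hext {D₁ D₂ : Derivation L F F} (hf : ∀ i, D₁ (f i) = D₂ (f i)) (ht' : D₁ t = D₂ t) :
      D₁ = D₂ :=
    derivation_ext_of_adjoin_pPowerField_eq_top p _ ht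
      (Set.eqOn_union.2 ⟨Set.forall_mem_range.2 hf, Set.eqOn_singleton.2 ht'⟩)
  have hJt : jacobianDerivation δ f t ≠ 0 := by
    rw [jacobianDerivation_apply]
    exact det_derivation_apply_ne_zero hδ fun D hD =>
      hext (fun i => by simpa using hD i.castSucc) (by simpa using hD (Fin.last m))
  refine ⟨d t / jacobianDerivation δ f t, hext (fun i => ?_) ?_⟩
  · simp [hd, jacobianDerivation_apply_self]
  · simp [hJt]

/-- Lemma 1 (positive-characteristic analog of Makar-Limanov's lemma).
`F` is (a model of) the fraction field `L(x₁,…,xₙ)` with `n = m + 1 ≥ 1`,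
`δ i` is the unique `L`-derivation of `F` extending `∂/∂xᵢ`,
`f₁,…,f_{n-1}` are `p`-independent over `M = L(x₁^p,…,xₙ^p)`,
and `d` is an `L`-derivation of `F` killing all the `fᵢ`.
Then `d = c · d_F` for some `c ∈ F`, where
`d_F(g) = det` of the matrix with rows `(∂fₐ/∂x_b)` and last row `(∂g/∂x_b)`. -/
theorem lemma1_jacobian_factorization
    {L : Type*} [Field L] (p : ℕ) [Fact p.Prime] [CharP L p] (m : ℕ)
    (F : Type*) [Field F] [Algebra (MvPolynomial (Fin (m + 1)) L) F]
    [IsFractionRing (MvPolynomial (Fin (m + 1)) L) F]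
    [Algebra L F] [IsScalarTower L (MvPolynomial (Fin (m + 1)) L) F]
    (δ : Fin (m + 1) → Derivation L F F)
    (hδ : ∀ (i : Fin (m + 1)) (q : MvPolynomial (Fin (m + 1)) L),
      δ i (algebraMap (MvPolynomial (Fin (m + 1)) L) F q) =
        algebraMap (MvPolynomial (Fin (m + 1)) L) F (pderiv i q))
    (f : Fin m → F)
    (hind : LinearIndependent
      ↥(IntermediateField.adjoin L
          (Set.range fun i : Fin (m + 1) =>
            algebraMap (MvPolynomial (Fin (m + 1)) L) F (X i) ^ p))
      (fun e : Fin m → Fin p => ∏ i, f i ^ (e i : ℕ)))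
    (d : Derivation L F F) (hd : ∀ i, d (f i) = 0) :
    ∃ c : F, ∀ g : F,
      d g = c * Matrix.det (Matrix.of (Fin.snoc (fun a b => δ b (f a)) (fun b => δ b g))) := by
  have : CharP F p := charP_of_injective_algebraMap (algebraMap L F).injective p
  have hx := adjoin_range_algebraMap_X_eq_top (L := L) (F := F) (σ := Fin (m + 1))
  rw [adjoin_range_pow_eq_pPowerField p hx] at hind
  obtain ⟨c, rfl⟩ := lemma1_jacobian_factorization_general p _
    (IntermediateField.adjoin_eq_top_of_adjoin_eq_top L hx) δ
    (fun i j => by simp [hδ, pderiv_X, Pi.single_apply, eq_comm]) f hind d hd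
  exact ⟨c, fun _ => rfl⟩
end

section
/- Let K be a unique factorization domain of characteristic p > 0. Assume the polynomials f_1, …, f_{n−1} ∈ K[x_1, …, x_n] are p-independent over K[x_1^p, …, x_n^p], and put F̄ = dgcd(f_1, …, f_{n−1}). Let d be a K-derivation of K[x_1, …, x_n] such that d(f_1) = ⋯ = d(f_{n−1}) = 0. Then F̄·d = h·d_F for some polynomial h ∈ K[x_1, …, x_n] such that h is associated to gcd(d(x_1), …, d(x_n)), where F = (f_1, …, f_{n−1}). -/
/-!
Let `J` be the `m × (m + 1)` Jacobian matrix of the `f_a` and `w` the vector of its signed maximal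
minors, so that `d_F g = ∑ i, ∂_i g * w i`. By the chain rule the vector `v i = d (x_i)` satisfies
`d g = ∑ i, ∂_i g * v i`, and `d (f_a) = 0` says that `J v = 0`. Cramer's rule for `J` with the
`k`-th unit vector appended as last row gives `w k * v i = v k * w i`, so `v` and `w` are
proportional. Taking the gcd over `i` turns this into `w k * gcd v ∼ v k * gcd w`. Absorbing the
unit into `h ∼ gcd v` and cancelling some `w k ≠ 0` yields `gcd w * v i = h * w i`, the claim
coefficient by coefficient; if `w = 0`, then `gcd w = 0` and both sides vanish.
-/

open MvPolynomial

section GCD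

variable {R ι : Type*} [CommMonoidWithZero R] {v w : ι → R} {F G : R}

/-- `F` is a greatest common divisor of the family `w`. As a relation it determines `F` only up to
associates, so that no normalization has to be chosen. -/
def IsGCD (w : ι → R) (F : R) : Prop :=
  (∀ i, F ∣ w i) ∧ ∀ q, (∀ i, q ∣ w i) → q ∣ F

theorem isGCD_iff : IsGCD w F ↔ ∀ q, q ∣ F ↔ ∀ i, q ∣ w i :=
  ⟨fun h q => ⟨fun hq i => hq.trans (h.1 i), h.2 q⟩,
    fun h => ⟨(h F).1 dvd_rfl, fun q => (h q).2⟩⟩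

theorem IsGCD.associated [IsCancelMulZero R] (hF : IsGCD w F) (hG : IsGCD w G) :
    Associated F G :=
  associated_of_dvd_dvd (hG.2 F hF.1) (hF.2 G hG.1)

theorem IsGCD.of_associated (hF : IsGCD w F) (h : Associated F G) : IsGCD w G :=
  ⟨fun i => h.dvd_iff_dvd_left.1 (hF.1 i), fun q hq => h.dvd_iff_dvd_right.1 (hF.2 q hq)⟩

theorem IsGCD.eq_zero (hF : IsGCD w F) (hw : ∀ i, w i = 0) : F = 0 :=
  zero_dvd_iff.1 (hF.2 0 fun i => (hw i).symm ▸ dvd_rfl)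

theorem isGCD_finset_gcd [Fintype ι] [NormalizedGCDMonoid R] (w : ι → R) :
    IsGCD w (Finset.univ.gcd w) :=
  ⟨fun i => Finset.gcd_dvd (Finset.mem_univ i), fun _ hq => Finset.dvd_gcd fun i _ => hq i⟩

variable [Finite ι] [IsGCDMonoid R]

theorem exists_isGCD (w : ι → R) : ∃ F, IsGCD w F := by
  obtain ⟨_⟩ := nonempty_fintype ι
  obtain ⟨_⟩ : Nonempty (NormalizedGCDMonoid R) := inferInstance
  exact ⟨_, isGCD_finset_gcd w⟩

theorem IsGCD.mul_left (hF : IsGCD w F) (a : R) : IsGCD (fun i => a * w i) (a * F) := by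
  have : IsCancelMulZero R := IsGCDMonoid.isCancelMulZero R
  obtain ⟨_⟩ := nonempty_fintype ι
  obtain ⟨_⟩ : Nonempty (NormalizedGCDMonoid R) := inferInstance
  exact (isGCD_finset_gcd _).of_associated <|
    (Finset.gcd_mul_left' _ w a).trans (((isGCD_finset_gcd w).associated hF).mul_left a)

theorem IsGCD.exists_isGCD_mul_eq (hF : IsGCD w F) (hwv : ∀ k i, w k * v i = v k * w i) :
    ∃ h, IsGCD v h ∧ ∀ i, F * v i = h * w i := by
  have : IsCancelMulZero R := IsGCDMonoid.isCancelMulZero R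
  obtain ⟨g, hg⟩ := exists_isGCD v
  by_cases hw : ∀ i, w i = 0
  · exact ⟨g, hg, fun i => by rw [hF.eq_zero hw, hw, zero_mul, mul_zero]⟩
  obtain ⟨k, hk⟩ := not_forall.1 hw
  have hkg : IsGCD (fun i => v k * w i) (w k * g) := funext (hwv k) ▸ hg.mul_left (w k)
  obtain ⟨u, hu⟩ := hkg.associated (hF.mul_left (v k))
  refine ⟨g * u, hg.of_associated ⟨u, rfl⟩, fun i => mul_left_cancel₀ hk ?_⟩
  calc w k * (F * v i) = v k * F * w i := by rw [mul_left_comm, hwv]; ac_rfl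
    _ = w k * (g * u * w i) := by rw [← hu]; ac_rfl

end GCD

section Minors

open Matrix

variable {R : Type*} [CommRing R] {m : ℕ} (J : Fin m → Fin (m + 1) → R)

/-- The `j`-th signed maximal minor of an `m × (m + 1)` matrix `J`, up to sign the determinant of
`J` with column `j` deleted. It is encoded as the determinant of `J` with the `j`-th unit vector
appended as last row, so that its sign is that of a cofactor in the last row; for a Jacobian matrix
these are the coefficients of the Jacobian derivation. -/
def signedMinor (j : Fin (m + 1)) : R :=
  (of (Fin.snoc J (Pi.single j 1) : Fin (m + 1) → Fin (m + 1) → R)).det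

theorem signedMinor_eq_det_succAbove (j : Fin (m + 1)) :
    signedMinor J j = (-1) ^ (m + j : ℕ) * (of fun a b => J a (j.succAbove b)).det := by
  rw [signedMinor, det_succ_row _ (Fin.last m), Finset.sum_eq_single j]
  · simp [submatrix, Fin.succAbove_last]
  · simp +contextual
  · simp

theorem adjugate_snoc_last (r : Fin (m + 1) → R) (j : Fin (m + 1)) :
    adjugate (of (Fin.snoc J r : Fin (m + 1) → Fin (m + 1) → R)) j (Fin.last m) =
      signedMinor J j := by
  rw [adjugate_apply, signedMinor]
  exact congrArg det (Fin.update_snoc_last (α := fun _ => Fin (m + 1) → R) _ _ _)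

theorem det_snoc (r : Fin (m + 1) → R) :
    (of (Fin.snoc J r : Fin (m + 1) → Fin (m + 1) → R)).det = ∑ j, r j * signedMinor J j := by
  rw [det_eq_sum_mul_adjugate_row _ (Fin.last m)]
  simp only [adjugate_snoc_last, of_apply, Fin.snoc_last]

variable {J}

theorem snoc_single_mulVec {v : Fin (m + 1) → R} (hv : ∀ a, J a ⬝ᵥ v = 0) (k : Fin (m + 1)) :
    of (Fin.snoc J (Pi.single k 1) : Fin (m + 1) → Fin (m + 1) → R) *ᵥ v =
      Pi.single (Fin.last m) (v k) := by
  funext i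
  cases i using Fin.lastCases with
  | last => simp [mulVec]
  | cast a => simpa [mulVec, (Fin.castSucc_lt_last a).ne] using hv a

theorem signedMinor_mul_comm {v : Fin (m + 1) → R} (hv : ∀ a, J a ⬝ᵥ v = 0)
    (k i : Fin (m + 1)) : signedMinor J k * v i = v k * signedMinor J i := by
  set A := of (Fin.snoc J (Pi.single k 1) : Fin (m + 1) → Fin (m + 1) → R)
  calc signedMinor J k * v i = ((adjugate A * A) *ᵥ v) i := by
        rw [adjugate_mul, smul_mulVec, one_mulVec, Pi.smul_apply, smul_eq_mul, signedMinor]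
    _ = (adjugate A *ᵥ Pi.single (Fin.last m) (v k)) i := by
        rw [← mulVec_mulVec, snoc_single_mulVec hv]
    _ = v k * signedMinor J i := by
        rw [mulVec_single, Pi.smul_apply, col_apply, adjugate_snoc_last, op_smul_eq_mul, mul_comm]

theorem forall_dvd_minor_iff (q : R) :
    (∀ j : Fin m → Fin (m + 1), q ∣ (of fun a b => J a (j b)).det) ↔
      ∀ i, q ∣ signedMinor J i := by
  refine ⟨fun h i => signedMinor_eq_det_succAbove J i ▸ (h i.succAbove).mul_left _,
    fun h j => ?_⟩
  -- A column selection `j` misses some `i`, hence factors through `i.succAbove`, and its minor is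
  -- the `i`-th one times the determinant of a 0-1 matrix.
  obtain ⟨i, hi⟩ : ∃ i, i ∉ Set.range j := by
    by_contra! hj
    simpa using Fintype.card_le_of_surjective j hj
  choose σ hσ using fun b => Fin.exists_succAbove_eq (fun h : j b = i => hi ⟨b, h⟩)
  have hfactor : (of fun a b => J a (j b)) =
      (of fun a b => J a (i.succAbove b)) * (1 : Matrix (Fin m) (Fin m) R).submatrix id σ := by
    ext a b
    simp [mul_apply, one_apply, hσ]
  have hdvd := h i
  rw [signedMinor_eq_det_succAbove, (isUnit_one.neg.pow _).dvd_mul_left] at hdvd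
  rw [hfactor, det_mul]
  exact hdvd.mul_right _

end Minors

section Jacobian

variable {K : Type*} [CommRing K]

theorem derivation_apply_eq_sum_pderiv {σ A : Type*} [Fintype σ] [AddCommGroup A] [Module K A]
    [Module (MvPolynomial σ K) A] [IsScalarTower K (MvPolynomial σ K) A]
    (d : Derivation K (MvPolynomial σ K) A) (g : MvPolynomial σ K) :
    d g = ∑ i, pderiv i g • d (X i) := by
  have hD := congrArg d.liftKaehlerDifferential
    ((KaehlerDifferential.mvPolynomialBasis K σ).sum_repr (KaehlerDifferential.D K _ g))
  simpa [KaehlerDifferential.mvPolynomialBasis_repr_apply] using hD.symm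

theorem corollary1_dgcd_factorization_general {m : ℕ}
    [IsGCDMonoid (MvPolynomial (Fin (m + 1)) K)] {f : Fin m → MvPolynomial (Fin (m + 1)) K}
    {F : MvPolynomial (Fin (m + 1)) K}
    (hF : IsGCD (fun j : Fin m → Fin (m + 1) =>
      Matrix.det (Matrix.of fun a b => pderiv (j b) (f a))) F)
    (d : Derivation K (MvPolynomial (Fin (m + 1)) K) (MvPolynomial (Fin (m + 1)) K))
    (hd : ∀ a, d (f a) = 0) :
    ∃ h, IsGCD (fun i => d (X i)) h ∧ ∀ g, F * d g =
      h * Matrix.det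
        (Matrix.of (Fin.snoc (fun a b => pderiv b (f a)) (fun b => pderiv b g))) := by
  let J (a : Fin m) (i : Fin (m + 1)) := pderiv i (f a)
  have hminor : IsGCD (signedMinor J) F :=
    isGCD_iff.2 fun q => (isGCD_iff.1 hF q).trans (forall_dvd_minor_iff (J := J) q)
  have hker (a : Fin m) : J a ⬝ᵥ (fun i => d (X i)) = 0 :=
    (derivation_apply_eq_sum_pderiv d (f a)).symm.trans (hd a)
  obtain ⟨h, hgcd, hmul⟩ := hminor.exists_isGCD_mul_eq (signedMinor_mul_comm hker)
  refine ⟨h, hgcd, fun g => ?_⟩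
  rw [derivation_apply_eq_sum_pderiv d g, det_snoc, Finset.mul_sum, Finset.mul_sum]
  refine Finset.sum_congr rfl fun i _ => ?_
  rw [smul_eq_mul, mul_left_comm, hmul, mul_left_comm]

end Jacobian

/-- Corollary 1. `K` a UFD of characteristic `p > 0`,
`f₁,…,f_{n-1} ∈ K[x₁,…,xₙ]` (`n = m + 1`) `p`-independent over `B = K[x₁^p,…,xₙ^p]`,
`F̄ = dgcd(f₁,…,f_{n-1})` (a gcd of all the (n-1)×(n-1) Jacobian minors),
and `d` a `K`-derivation killing all the `fᵢ`.  Then `F̄·d = h·d_F` for some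
polynomial `h` associated to `gcd(d(x₁),…,d(xₙ))`, i.e. `h` is itself a gcd of
the `d(xᵢ)`. -/
theorem corollary1_dgcd_factorization
    {K : Type*} [CommRing K] [IsDomain K] [UniqueFactorizationMonoid K]
    (p : ℕ) [Fact p.Prime] [CharP K p] (m : ℕ)
    (f : Fin m → MvPolynomial (Fin (m + 1)) K)
    (hind : LinearIndependent
      ↥(Algebra.adjoin K
          (Set.range fun i : Fin (m + 1) => (X i : MvPolynomial (Fin (m + 1)) K) ^ p))
      (fun e : Fin m → Fin p => ∏ i, f i ^ (e i : ℕ)))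
    (Fbar : MvPolynomial (Fin (m + 1)) K)
    (hFbar₁ : ∀ j : Fin m → Fin (m + 1),
      Fbar ∣ Matrix.det (Matrix.of fun a b => pderiv (j b) (f a)))
    (hFbar₂ : ∀ q : MvPolynomial (Fin (m + 1)) K,
      (∀ j : Fin m → Fin (m + 1),
        q ∣ Matrix.det (Matrix.of fun a b => pderiv (j b) (f a))) → q ∣ Fbar)
    (d : Derivation K (MvPolynomial (Fin (m + 1)) K) (MvPolynomial (Fin (m + 1)) K))
    (hd : ∀ i, d (f i) = 0) :
    ∃ h : MvPolynomial (Fin (m + 1)) K,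
      ((∀ i, h ∣ d (X i)) ∧
        ∀ q : MvPolynomial (Fin (m + 1)) K, (∀ i, q ∣ d (X i)) → q ∣ h) ∧
      ∀ g, Fbar * d g =
        h * Matrix.det
          (Matrix.of (Fin.snoc (fun a b => pderiv b (f a)) (fun b => pderiv b g))) :=
  corollary1_dgcd_factorization_general ⟨hFbar₁, hFbar₂⟩ d hd
end

section
/- Let K be a unique factorization domain of characteristic p > 0 and let d be a nonzero K-derivation of K[x_1, …, x_n]. If f_1, …, f_{n−1} ∈ K[x_1, …, x_n]^d are polynomials such that dgcd(f_1, …, f_{n−1}) is a unit, then f_1, …, f_{n−1} form a p-basis of the ring of constants K[x_1, …, x_n]^d over K[x_1^p, …, x_n^p]. -/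
open MvPolynomial

/-!
Let `B = K[xᵢ ^ p]` and `A = K[xᵢ]`, a free `B`-module of rank `p ^ n`. In characteristic `p` every
`K`-derivation of `A` is `B`-linear. Hence, if `P` is a polynomial over `B` with exponents less than
`p`, differentiating `P(f)` and applying Cramer's rule to the Jacobian matrix of `f` recovers the
values `(∂P/∂yᵢ)(f)` up to a Jacobian determinant `J`; induction on the degree of `P` then shows
that `P(f) ∈ qA` with `q ∈ B` forces `q` to divide all coefficients of `P`, as soon as `J` is a
nonzerodivisor modulo `q`.

For `q = 0` and `J ≠ 0` this is independence. It also applies to `f` enlarged by a variable `x_l`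
with respect to which `J` is not taken: this gives `p ^ n` independent products, so every constant
`g` of `d` has a multiple `b g`, `0 ≠ b ∈ B`, that is a combination of them, and `d (b g) = 0`
removes `x_l` from this combination. Finally `b` is cancelled one prime factor `q` at a time: since
the dgcd is a unit, some `J ^ p ∈ B` is not divisible by `q`, and then `J` is a nonzerodivisor
modulo `q` because `A` is free over `B`.
-/

section ReducedPolynomials

variable {R A ι : Type*} [CommRing R] [CommRing A] [Algebra R A]

/-- The exponent vectors of monomials in which every variable has degree less than `p`. The
polynomials with these monomials are `restrictSupport R (reducedExponents ι p)`. -/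
def reducedExponents (ι : Type*) (p : ℕ) : Set (ι →₀ ℕ) :=
  {s | ∀ i, s i < p}

lemma isLowerSet_reducedExponents (p : ℕ) : IsLowerSet (reducedExponents ι p) :=
  fun _ _ hts hs i ↦ (hts i).trans_lt (hs i)

lemma add_single_mem_support_of_mem_support_pderiv {P : MvPolynomial ι R} {i : ι} {s : ι →₀ ℕ}
    (hs : s ∈ (pderiv i P).support) : s + Finsupp.single i 1 ∈ P.support := by
  rw [mem_support_iff, coeff_pderiv] at hs
  exact mem_support_iff.2 (left_ne_zero_of_mul hs)

lemma pderiv_mem_restrictSupport {S : Set (ι →₀ ℕ)} (hS : IsLowerSet S) {P : MvPolynomial ι R}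
    (hP : P ∈ restrictSupport R S) (i : ι) : pderiv i P ∈ restrictSupport R S :=
  fun _ hs ↦ hS le_self_add (hP (add_single_mem_support_of_mem_support_pderiv hs))

lemma totalDegree_pderiv_lt {P : MvPolynomial ι R} {i : ι} (h : pderiv i P ≠ 0) :
    (pderiv i P).totalDegree < P.totalDegree := by
  obtain ⟨s, hs, hdeg⟩ := (pderiv i P).support.exists_mem_eq_sup
    (support_nonempty.2 h) fun s ↦ s.sum fun _ e ↦ e
  rw [totalDegree, hdeg, Nat.lt_iff_add_one_le]
  simpa [Finsupp.sum_add_index'] using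
    le_totalDegree (add_single_mem_support_of_mem_support_pderiv hs)

lemma coeff_mem_of_forall_coeff_pderiv_mem {p : ℕ} [Fact p.Prime] [CharP R p] {N : Ideal R}
    {P : MvPolynomial ι R} {i : ι} (h : ∀ t, coeff t (pderiv i P) ∈ N) {s : ι →₀ ℕ}
    (hs0 : s i ≠ 0) (hsp : s i < p) : coeff s P ∈ N := by
  obtain ⟨t, rfl⟩ : ∃ t : ι →₀ ℕ, s = t + Finsupp.single i 1 :=
    ⟨s - Finsupp.single i 1, (tsub_add_cancel_of_le <|
      Finsupp.single_le_iff.2 (Nat.one_le_iff_ne_zero.2 hs0)).symm⟩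
  have hunit : IsUnit (((t + Finsupp.single i 1 : ι →₀ ℕ) i : ℕ) : R) :=
    (CharP.isUnit_natCast_iff Fact.out).2 (Nat.not_dvd_of_pos_of_lt (Nat.pos_of_ne_zero hs0) hsp)
  refine (N.mul_unit_mem_iff_mem hunit).1 ?_
  simpa [coeff_pderiv] using h t

variable [Fintype ι]

/-- The product `∏ i, f i ^ e i` with all exponents less than `p`. -/
def reducedMonomial (p : ℕ) (f : ι → A) (e : ι → Fin p) : A :=
  ∏ i, f i ^ (e i : ℕ)

/-- The family `f` is `p`-independent over `R` if no nonzero polynomial with coefficients in `R`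
and all exponents less than `p` vanishes at `f`. -/
def PIndependent (R : Type*) [CommRing R] [Algebra R A] (p : ℕ) (f : ι → A) : Prop :=
  ∀ P ∈ restrictSupport R (reducedExponents ι p), aeval f P = 0 → P = 0

/-- The family `f` is a `p`-basis of the `R`-submodule `S` of `A`: its reduced monomials form a
basis of `S`. -/
structure IsPBasis (p : ℕ) (f : ι → A) (S : Submodule R A) : Prop where
  linearIndependent : LinearIndependent R (reducedMonomial p f)
  span_eq : Submodule.span R (Set.range (reducedMonomial p f)) = S

/-- The exponent vector, as a finitely supported function, of a reduced monomial. -/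
noncomputable def exponentVector {p : ℕ} (e : ι → Fin p) : ι →₀ ℕ :=
  Finsupp.equivFunOnFinite.symm fun i ↦ e i

lemma exponentVector_injective {p : ℕ} :
    Function.Injective (exponentVector : (ι → Fin p) → ι →₀ ℕ) :=
  Finsupp.equivFunOnFinite.symm.injective.comp Fin.val_injective.comp_left

lemma range_exponentVector (p : ℕ) :
    Set.range (exponentVector : (ι → Fin p) → ι →₀ ℕ) = reducedExponents ι p := by
  ext s
  constructor
  · rintro ⟨e, rfl⟩ i
    exact (e i).isLt
  · intro hs
    exact ⟨fun i ↦ ⟨s i, hs i⟩, Finsupp.ext fun _ ↦ rfl⟩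

lemma reducedMonomial_eq_aeval_comp (p : ℕ) (f : ι → A) :
    reducedMonomial p f =
      (aeval f).toLinearMap ∘ fun e ↦ monomial (exponentVector e) (1 : R) := by
  ext e
  simp [reducedMonomial, exponentVector, aeval_monomial, Finsupp.prod_fintype]

lemma span_monomial_exponentVector (p : ℕ) :
    Submodule.span R (Set.range fun e : ι → Fin p ↦ monomial (exponentVector e) (1 : R)) =
      restrictSupport R (reducedExponents ι p) := by
  rw [restrictSupport_eq_span, ← range_exponentVector, ← Set.range_comp]
  rfl

lemma mem_span_reducedMonomial_iff {p : ℕ} {f : ι → A} {g : A} :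
    g ∈ Submodule.span R (Set.range (reducedMonomial p f)) ↔
      ∃ P ∈ restrictSupport R (reducedExponents ι p), aeval f P = g := by
  rw [reducedMonomial_eq_aeval_comp (R := R), Set.range_comp, ← Submodule.map_span,
    span_monomial_exponentVector]
  rfl

lemma PIndependent.linearIndependent {p : ℕ} {f : ι → A} (hf : PIndependent R p f) :
    LinearIndependent R (reducedMonomial p f) := by
  rw [reducedMonomial_eq_aeval_comp (R := R)]
  have hmon : LinearIndependent R fun e : ι → Fin p ↦ monomial (exponentVector e) (1 : R) :=
    (basisMonomials ι R).linearIndependent.comp _ exponentVector_injective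
  refine hmon.map ?_
  rw [span_monomial_exponentVector, LinearMap.disjoint_ker]
  exact hf

end ReducedPolynomials

section Independence

variable {B A M ι : Type*} [CommRing B] [CommRing A] [Algebra B A]

lemma coeff_zero_mem_comap_of_aeval_mem {N : Ideal A} {f : ι → A} {P : MvPolynomial ι B}
    (hP : aeval f P ∈ N) (h : ∀ s ≠ 0, coeff s P ∈ N.comap (algebraMap B A)) :
    coeff 0 P ∈ N.comap (algebraMap B A) := by
  classical
  have hsub : aeval f (P - C (coeff 0 P)) ∈ N := by
    rw [aeval_def, eval₂_eq]
    refine N.sum_mem fun s _ ↦ N.mul_mem_right _ ?_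
    rcases eq_or_ne s 0 with rfl | hs
    · simp
    · simpa [coeff_C, hs.symm] using h s hs
  rw [map_sub, aeval_C] at hsub
  exact (N.sub_mem_iff_right hP).1 hsub

variable [Fintype ι]

lemma derivation_aeval [AddCommGroup M] [Module A M] [Module B M] (D : Derivation B A M)
    (f : ι → A) (P : MvPolynomial ι B) :
    D (aeval f P) = ∑ i, aeval f (pderiv i P) • D (f i) := by
  classical
  induction P using MvPolynomial.induction_on with
  | C b => simp
  | add P Q hP hQ => simp [hP, hQ, add_smul, Finset.sum_add_distrib]
  | mul_X P j hP =>
    simp [hP, pderiv_X, add_smul, mul_smul, Finset.sum_add_distrib, Finset.smul_sum,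
      Pi.single_apply, apply_ite (aeval f), ite_smul]

variable [DecidableEq ι] {N : Ideal A} {D : ι → Derivation B A A} {f : ι → A}

/-- Cramer's rule: differentiating `aeval f P` gives a linear system for the values
`aeval f (pderiv i P)` whose matrix is `(D b (f a))`. -/
lemma aeval_pderiv_mem_of_aeval_mem (hN : ∀ b, ∀ x ∈ N, D b x ∈ N)
    (hdet : ∀ x, (Matrix.of fun a b ↦ D b (f a)).det * x ∈ N → x ∈ N) {P : MvPolynomial ι B}
    (hP : aeval f P ∈ N) (i : ι) : aeval f (pderiv i P) ∈ N := by
  set M : Matrix ι ι A := Matrix.of fun a b ↦ D b (f a)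
  set u : ι → A := fun a ↦ aeval f (pderiv a P)
  have hsystem : Matrix.vecMul u M = fun b ↦ D b (aeval f P) := by
    ext b
    rw [derivation_aeval]
    rfl
  have hcramer : M.det * u i = ∑ b, D b (aeval f P) * M.adjugate b i := by
    have h : M.det • u = Matrix.vecMul (fun b ↦ D b (aeval f P)) M.adjugate := by
      rw [← hsystem, Matrix.vecMul_vecMul, Matrix.mul_adjugate, Matrix.vecMul_smul,
        Matrix.vecMul_one]
    exact congrFun h i
  refine hdet _ ?_
  rw [hcramer]
  exact N.sum_mem fun b _ ↦ N.mul_mem_right _ (hN b _ hP)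

/-- The partial derivatives of `P` again have values in `N`, so induction on the degree puts their
coefficients, and hence all nonconstant coefficients of `P`, in `N`. -/
lemma coeff_mem_comap_of_aeval_mem {p : ℕ} [Fact p.Prime] [CharP B p]
    (hN : ∀ b, ∀ x ∈ N, D b x ∈ N)
    (hdet : ∀ x, (Matrix.of fun a b ↦ D b (f a)).det * x ∈ N → x ∈ N) {P : MvPolynomial ι B}
    (hP : P ∈ restrictSupport B (reducedExponents ι p)) (hPN : aeval f P ∈ N) (s : ι →₀ ℕ) :
    coeff s P ∈ N.comap (algebraMap B A) := by
  induction hk : P.totalDegree using Nat.strong_induction_on generalizing P s with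
  | _ k ih =>
    have hnonconst : ∀ s ≠ 0, coeff s P ∈ N.comap (algebraMap B A) := by
      intro s hs
      by_cases hsP : s ∈ P.support
      · obtain ⟨i, hi⟩ := Finsupp.ne_iff.1 hs
        refine coeff_mem_of_forall_coeff_pderiv_mem (i := i) (fun t ↦ ?_) hi (hP hsP i)
        by_cases h0 : pderiv i P = 0
        · simp [h0]
        · exact ih _ (hk ▸ totalDegree_pderiv_lt h0)
            (pderiv_mem_restrictSupport (isLowerSet_reducedExponents p) hP i)
            (aeval_pderiv_mem_of_aeval_mem hN hdet hPN i) t rfl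
      · simp [notMem_support_iff.1 hsP]
    rcases eq_or_ne s 0 with rfl | hs
    · exact coeff_zero_mem_comap_of_aeval_mem hPN hnonconst
    · exact hnonconst s hs

lemma pIndependent_of_det_mem_nonZeroDivisors [FaithfulSMul B A] {p : ℕ} [Fact p.Prime]
    [CharP B p] (hdet : (Matrix.of fun a b ↦ D b (f a)).det ∈ nonZeroDivisors A) :
    PIndependent B p f := by
  intro P hP h0
  ext1 s
  have hs := coeff_mem_comap_of_aeval_mem (N := ⊥) (D := D) (by simp)
    (fun x hx ↦ (mul_left_mem_nonZeroDivisors_eq_zero_iff hdet).1 hx) hP h0 s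
  simpa using hs

end Independence

section Saturation

lemma algebraMap_dvd_algebraMap_iff {B A : Type*} [CommRing B] [CommRing A] [Algebra B A]
    [Module.FaithfullyFlat B A] {q b : B} : algebraMap B A q ∣ algebraMap B A b ↔ q ∣ b := by
  rw [← Ideal.mem_span_singleton, ← Ideal.mem_span_singleton,
    ← Ideal.comap_map_eq_self_of_faithfullyFlat (B := A) (Ideal.span {q}), Ideal.mem_comap,
    Ideal.map_span, Set.image_singleton]

lemma algebraMap_dvd_of_dvd_smul {B A : Type*} [CommRing B] [CommRing A] [Algebra B A]
    [Module.Free B A] {q c : B} (hq : Prime q) (hc : ¬ q ∣ c) {x : A}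
    (h : algebraMap B A q ∣ c • x) : algebraMap B A q ∣ x := by
  obtain ⟨y, hy⟩ := h
  let v := Module.Free.chooseBasis B A
  rw [← v.linearCombination_repr x, Finsupp.linearCombination_apply]
  refine Finset.dvd_sum fun e _ ↦ ?_
  have hcoord : c * v.repr x e = q * v.repr y e := by
    simpa [← Algebra.smul_def] using DFunLike.congr_fun (congrArg v.repr hy) e
  have hdvd : q ∣ v.repr x e := (hq.dvd_or_dvd ⟨_, hcoord⟩).resolve_left hc
  simp only [Algebra.smul_def]
  exact (map_dvd (algebraMap B A) hdvd).mul_right _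

lemma mem_of_smul_mem_of_forall_prime {B V : Type*} [CommRing B]
    [UniqueFactorizationMonoid B] [AddCommGroup V] [Module B V] {S : Submodule B V}
    (hS : ∀ q : B, Prime q → ∀ x, q • x ∈ S → x ∈ S) {b : B} (hb : b ≠ 0) {x : V}
    (hx : b • x ∈ S) : x ∈ S := by
  induction b using UniqueFactorizationMonoid.induction_on_prime with
  | h₁ => exact absurd rfl hb
  | h₂ u hu => exact (S.smul_mem_iff_of_isUnit hu).1 hx
  | h₃ b q hb0 hq ih => exact ih hb0 (hS q hq _ (by rwa [← mul_smul]))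

lemma mem_span_of_smul_mem_span {B A ι : Type*} [CommRing B] [CommRing A] [IsDomain A]
    [Algebra B A] [Module.FaithfullyFlat B A] [Fintype ι] [DecidableEq ι] {p : ℕ} [Fact p.Prime]
    [CharP B p] {D : ι → Derivation B A A} {f : ι → A} {q : B} (hq : q ≠ 0)
    (hdet : ∀ x, algebraMap B A q ∣ (Matrix.of fun a b ↦ D b (f a)).det * x →
      algebraMap B A q ∣ x) {g : A}
    (hg : q • g ∈ Submodule.span B (Set.range (reducedMonomial p f))) :
    g ∈ Submodule.span B (Set.range (reducedMonomial p f)) := by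
  obtain ⟨P, hP, hPg⟩ := mem_span_reducedMonomial_iff.1 hg
  have hstable : ∀ i, ∀ x ∈ Ideal.span {algebraMap B A q},
      D i x ∈ Ideal.span {algebraMap B A q} := by
    simp only [Ideal.mem_span_singleton]
    rintro i _ ⟨y, rfl⟩
    exact ⟨D i y, by rw [← Algebra.smul_def, Derivation.map_smul, Algebra.smul_def]⟩
  have hPq : aeval f P ∈ Ideal.span {algebraMap B A q} := by
    rw [hPg, Algebra.smul_def]
    exact Ideal.mul_mem_right _ _ (Ideal.mem_span_singleton_self _)
  have hcoeff : ∀ s, q ∣ coeff s P := fun s ↦ algebraMap_dvd_algebraMap_iff.1 <|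
    Ideal.mem_span_singleton.1 <| coeff_mem_comap_of_aeval_mem hstable
      (by simpa only [Ideal.mem_span_singleton] using hdet) hP hPq s
  obtain ⟨Q, rfl⟩ := (C_dvd_iff_dvd_coeff q P).2 hcoeff
  have := IsDomain.of_faithfulSMul B A
  have hsupport : (C q * Q).support = Q.support := by
    rw [C_mul', support_smul_eq hq]
  have hQ : Q ∈ restrictSupport B (reducedExponents ι p) := fun s hs ↦ hP (hsupport.ge hs)
  rw [map_mul, aeval_C, Algebra.smul_def] at hPg
  exact mem_span_reducedMonomial_iff.2
    ⟨Q, hQ, mul_left_cancel₀ (by simpa using hq) hPg⟩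

end Saturation

section Constants

lemma isTorsion_quotient_span_of_linearIndependent {B V κ : Type*} [CommRing B] [IsDomain B]
    [AddCommGroup V] [Module B V] [Module.Finite B V] [Fintype κ] {v : κ → V}
    (hv : LinearIndependent B v) (hcard : Fintype.card κ = Module.finrank B V) :
    Module.IsTorsion B (V ⧸ Submodule.span B (Set.range v)) := by
  rw [← Module.finrank_eq_zero_iff_isTorsion]
  have h := (Submodule.span B (Set.range v)).finrank_quotient_add_finrank
  rw [finrank_span_eq_card hv] at h
  omega

lemma exists_smul_mem_of_isTorsion_quotient {B V : Type*} [CommRing B] [IsDomain B]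
    [AddCommGroup V] [Module B V] {S : Submodule B V} (hS : Module.IsTorsion B (V ⧸ S)) (x : V) :
    ∃ b : B, b ≠ 0 ∧ b • x ∈ S := by
  obtain ⟨b, hb⟩ := hS (x := Submodule.Quotient.mk x)
  exact ⟨b, nonZeroDivisors.ne_zero b.2, (Submodule.Quotient.mk_eq_zero S).1 hb⟩

variable {B A M ι : Type*} [CommRing B] [CommRing A] [Algebra B A] [AddCommGroup M] [Module A M]
  [Module B M] [Fintype ι] {p : ℕ}

lemma derivation_apply_eq_zero_of_mem_span {d : Derivation B A M} {f : ι → A}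
    (hf : ∀ i, d (f i) = 0) {g : A}
    (hg : g ∈ Submodule.span B (Set.range (reducedMonomial p f))) : d g = 0 := by
  obtain ⟨P, -, rfl⟩ := mem_span_reducedMonomial_iff.1 hg
  simp [derivation_aeval, hf]

lemma aeval_sumElim_mem_span_of_pderiv_eq_zero [Fact p.Prime] [CharP B p] {f : ι → A} {t : A}
    {P : MvPolynomial (ι ⊕ Unit) B} (hP : P ∈ restrictSupport B (reducedExponents (ι ⊕ Unit) p))
    (hder : pderiv (Sum.inr ()) P = 0) :
    aeval (Sum.elim f fun _ ↦ t) P ∈ Submodule.span B (Set.range (reducedMonomial p f)) := by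
  have hdeg : ∀ s ∈ P.support, s (Sum.inr ()) = 0 := by
    intro s hs
    by_contra h
    have h0 : coeff s P ∈ (⊥ : Ideal B) :=
      coeff_mem_of_forall_coeff_pderiv_mem (by simp [hder]) h (hP hs _)
    exact mem_support_iff.1 hs h0
  rw [aeval_def, eval₂_eq']
  refine Submodule.sum_mem _ fun s hs ↦ ?_
  rw [← Algebra.smul_def]
  refine Submodule.smul_mem _ _ (Submodule.subset_span ⟨fun i ↦ ⟨s (Sum.inl i), hP hs _⟩, ?_⟩)
  simp [reducedMonomial, hdeg s hs]

variable [IsDomain B] [Module.IsTorsionFree B M]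

lemma exists_derivation_ne_zero_of_isTorsion_quotient_span {d : Derivation B A M} (hd : d ≠ 0)
    {f : ι → A} (htors : Module.IsTorsion B
      (A ⧸ Submodule.span B (Set.range (reducedMonomial p f)))) :
    ∃ i, d (f i) ≠ 0 := by
  by_contra! hf
  refine hd (Derivation.ext fun x ↦ ?_)
  obtain ⟨b, hb, hbx⟩ := exists_smul_mem_of_isTorsion_quotient htors x
  have h : b • d x = 0 := by
    rw [← Derivation.map_smul]
    exact derivation_apply_eq_zero_of_mem_span hf hbx
  exact (smul_eq_zero.1 h).resolve_left hb

lemma exists_smul_mem_span_of_derivation_eq_zero [IsDomain A] [Module.IsTorsionFree A M]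
    [Fact p.Prime] [CharP B p] {d : Derivation B A M} (hd : d ≠ 0) {f : ι → A}
    (hdf : ∀ i, d (f i) = 0) {t : A}
    (hind : PIndependent B p (Sum.elim f fun _ : Unit ↦ t))
    (htors : Module.IsTorsion B
      (A ⧸ Submodule.span B (Set.range (reducedMonomial p (Sum.elim f fun _ : Unit ↦ t)))))
    {g : A} (hg : d g = 0) :
    ∃ b : B, b ≠ 0 ∧ b • g ∈ Submodule.span B (Set.range (reducedMonomial p f)) := by
  obtain ⟨b, hb, hbg⟩ := exists_smul_mem_of_isTorsion_quotient htors g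
  obtain ⟨P, hP, hPg⟩ := mem_span_reducedMonomial_iff.1 hbg
  have hdt : d t ≠ 0 := by
    obtain ⟨i | _, hi⟩ := exists_derivation_ne_zero_of_isTorsion_quotient_span hd htors
    · exact absurd (hdf i) hi
    · exact hi
  have hder : aeval (Sum.elim f fun _ : Unit ↦ t) (pderiv (Sum.inr ()) P) • d t = 0 := by
    calc
      _ = d (aeval (Sum.elim f fun _ : Unit ↦ t) P) := by simp [derivation_aeval, hdf]
      _ = 0 := by rw [hPg, Derivation.map_smul, hg, smul_zero]
  have hderP : pderiv (Sum.inr ()) P = 0 :=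
    hind _ (pderiv_mem_restrictSupport (isLowerSet_reducedExponents p) hP _)
      ((smul_eq_zero.1 hder).resolve_right hdt)
  exact ⟨b, hb, hPg ▸ aeval_sumElim_mem_span_of_pderiv_eq_zero hP hderP⟩

end Constants

section Jacobian

variable {K σ ι : Type*} [CommRing K] [Fintype ι] [DecidableEq ι]

/-- The Jacobian determinant `jac^{f}_{j}` of the family `f` with respect to the variables `j`. -/
noncomputable def jacobianMinor (f : ι → MvPolynomial σ K) (j : ι → σ) : MvPolynomial σ K :=
  Matrix.det (Matrix.of fun a b ↦ pderiv (j b) (f a))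

/-- `dgcd f` is a unit: the Jacobian determinants of `f` have no common nonunit divisor. -/
def HasUnitDgcd (f : ι → MvPolynomial σ K) : Prop :=
  ∀ q, (∀ j : ι → σ, q ∣ jacobianMinor f j) → IsUnit q

lemma HasUnitDgcd.exists_jacobianMinor_ne_zero [Nontrivial K] {f : ι → MvPolynomial σ K}
    (hf : HasUnitDgcd f) : ∃ j, jacobianMinor f j ≠ 0 := by
  by_contra! h
  exact not_isUnit_zero (hf 0 fun j ↦ by rw [h j])

/-- An irreducible factor of `q` that divides every `J ^ n` divides every `J`. -/
lemma HasUnitDgcd.exists_not_dvd_jacobianMinor_pow [UniqueFactorizationMonoid K]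
    {f : ι → MvPolynomial σ K} (hf : HasUnitDgcd f) {q : MvPolynomial σ K} (hq : ¬ IsUnit q)
    (hq0 : q ≠ 0) (n : ℕ) : ∃ j, ¬ q ∣ jacobianMinor f j ^ n := by
  by_contra! h
  obtain ⟨π, hπ, hπq⟩ := WfDvdMonoid.exists_irreducible_factor hq hq0
  exact hπ.not_isUnit (hf π fun j ↦ hπ.prime.dvd_of_dvd_pow (hπq.trans (h j)))

lemma jacobianMinor_sumElim_X (f : ι → MvPolynomial σ K) {j : ι → σ} {l : σ}
    (hl : ∀ b, j b ≠ l) :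
    jacobianMinor (Sum.elim f fun _ : Unit ↦ X l) (Sum.elim j fun _ ↦ l) = jacobianMinor f j := by
  have hblocks : (Matrix.of fun a b ↦ pderiv ((Sum.elim j fun _ : Unit ↦ l) b)
        ((Sum.elim f fun _ : Unit ↦ X l) a)) =
      Matrix.fromBlocks (Matrix.of fun a b ↦ pderiv (j b) (f a))
        (Matrix.of fun a _ ↦ pderiv l (f a)) 0 1 := by
    ext1 (a | a) (b | b)
    · rfl
    · rfl
    · simp [pderiv_X_of_ne (hl b).symm]
    · simp
  rw [jacobianMinor, hblocks, Matrix.det_fromBlocks_zero₂₁, Matrix.det_one, mul_one]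
  rfl

end Jacobian

section PthPowers

variable {K σ : Type*} [CommRing K]

/-- The subring `K[xᵢ ^ p]` of the polynomial ring `K[xᵢ]`. -/
noncomputable def pthPowers (K σ : Type*) [CommRing K] (p : ℕ) :
    Subalgebra K (MvPolynomial σ K) :=
  Algebra.adjoin K (Set.range fun i : σ ↦ (X i : MvPolynomial σ K) ^ p)

instance charP_pthPowers (p : ℕ) [CharP K p] : CharP (pthPowers K σ p) p :=
  (RingHom.charP_iff (algebraMap (pthPowers K σ p) (MvPolynomial σ K))
    Subtype.val_injective p).2 inferInstance

instance uniqueFactorizationMonoid_pthPowers [UniqueFactorizationMonoid K] (p : ℕ)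
    [NeZero p] : UniqueFactorizationMonoid (pthPowers K σ p) := by
  have hX : AlgebraicIndependent K fun i : σ ↦ (X i : MvPolynomial σ K) ^ p :=
    expand_injective (NeZero.pos p)
  exact hX.aevalEquiv.toMulEquiv.uniqueFactorizationMonoid inferInstance

lemma pow_mem_pthPowers {p : ℕ} [Fact p.Prime] [CharP K p] (P : MvPolynomial σ K) :
    P ^ p ∈ pthPowers K σ p := by
  induction P using MvPolynomial.induction_on with
  | C a => exact map_pow C a p ▸ Subalgebra.algebraMap_mem _ _
  | add P Q hP hQ => exact add_pow_char P Q p ▸ add_mem hP hQ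
  | mul_X P i hP => exact mul_pow P (X i) p ▸ mul_mem hP (Algebra.subset_adjoin ⟨i, rfl⟩)

section Derivation

variable {M : Type*} [AddCommGroup M] [Module K M] [Module (MvPolynomial σ K) M]

lemma derivation_eq_zero_of_mem_pthPowers {p : ℕ} [CharP K p]
    (d : Derivation K (MvPolynomial σ K) M) {b : MvPolynomial σ K} (hb : b ∈ pthPowers K σ p) :
    d b = 0 := by
  refine Derivation.eqOn_adjoin (D2 := 0) ?_ hb
  rintro _ ⟨i, rfl⟩
  simp [Derivation.leibniz_pow, ← Nat.cast_smul_eq_nsmul (MvPolynomial σ K)]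

/-- In characteristic `p`, a `K`-derivation of `K[xᵢ]` as a derivation over `K[xᵢ ^ p]`. -/
noncomputable def derivationOverPthPowers (p : ℕ) [CharP K p]
    (d : Derivation K (MvPolynomial σ K) M) :
    Derivation (pthPowers K σ p) (MvPolynomial σ K) M where
  toFun := d
  map_add' := map_add d
  map_smul' b x := by
    rw [Subalgebra.smul_def, smul_eq_mul, d.leibniz,
      derivation_eq_zero_of_mem_pthPowers d b.2, smul_zero, add_zero]
    rfl
  map_one_eq_zero' := d.map_one_eq_zero
  leibniz' := d.leibniz

end Derivation

section JacobianOverPthPowers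

variable {ι : Type*} [Fintype ι] [DecidableEq ι] {p : ℕ} [CharP K p]

lemma det_derivationOverPthPowers_pderiv (f : ι → MvPolynomial σ K) (j : ι → σ) :
    (Matrix.of fun a b ↦ derivationOverPthPowers p (pderiv (j b)) (f a)).det =
      jacobianMinor f j :=
  rfl

lemma pIndependent_of_jacobian_mem_nonZeroDivisors [Fact p.Prime]
    {f : ι → MvPolynomial σ K} {j : ι → σ}
    (hJ : jacobianMinor f j ∈ nonZeroDivisors (MvPolynomial σ K)) :
    PIndependent (pthPowers K σ p) p f := by
  rw [← det_derivationOverPthPowers_pderiv (p := p)] at hJ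
  exact pIndependent_of_det_mem_nonZeroDivisors hJ

end JacobianOverPthPowers

section Basis

variable [Fintype σ]

lemma span_reducedMonomial_X_eq_top (p : ℕ) [NeZero p] :
    Submodule.span (pthPowers K σ p)
      (Set.range (reducedMonomial p (X : σ → MvPolynomial σ K))) = ⊤ := by
  refine eq_top_iff.2 fun P _ ↦ ?_
  induction P using MvPolynomial.induction_on' with
  | add P Q hP hQ => exact add_mem (hP trivial) (hQ trivial)
  | monomial s r =>
    have hcoeff : C r * ∏ i, ((X i : MvPolynomial σ K) ^ p) ^ (s i / p) ∈ pthPowers K σ p :=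
      mul_mem (Subalgebra.algebraMap_mem _ r)
        (prod_mem fun i _ ↦ pow_mem (Algebra.subset_adjoin (Set.mem_range_self i)) _)
    have hmonomial : monomial s r = (⟨_, hcoeff⟩ : pthPowers K σ p) •
        reducedMonomial p X fun i ↦ ⟨s i % p, Nat.mod_lt _ (NeZero.pos p)⟩ := by
      simp only [reducedMonomial, Subalgebra.smul_def, smul_eq_mul, mul_assoc,
        ← Finset.prod_mul_distrib, ← pow_mul, ← pow_add, Nat.div_add_mod]
      rw [monomial_eq, Finsupp.prod_fintype _ _ (by simp)]
    rw [hmonomial]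
    exact Submodule.smul_mem _ _ (Submodule.subset_span (Set.mem_range_self _))

variable {p : ℕ} [Fact p.Prime] [CharP K p]

lemma linearIndependent_reducedMonomial_X :
    LinearIndependent (pthPowers K σ p)
      (reducedMonomial p (X : σ → MvPolynomial σ K)) := by
  classical
  have hJ : jacobianMinor (X : σ → MvPolynomial σ K) id = 1 := by
    have h : (Matrix.of fun a b ↦ pderiv b (X a : MvPolynomial σ K)) = 1 := by
      ext1 a b
      simp [pderiv_X, Matrix.one_apply, Pi.single_apply]
    exact (congrArg Matrix.det h).trans Matrix.det_one
  exact (pIndependent_of_jacobian_mem_nonZeroDivisors (hJ ▸ one_mem _)).linearIndependent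

/-- The monomials with exponents less than `p`, as a basis of `K[xᵢ]` over `K[xᵢ ^ p]`. -/
noncomputable def reducedMonomialBasis (K σ : Type*) [CommRing K] [Fintype σ] (p : ℕ)
    [Fact p.Prime] [CharP K p] :
    Module.Basis (σ → Fin p) (pthPowers K σ p) (MvPolynomial σ K) :=
  Module.Basis.mk linearIndependent_reducedMonomial_X (span_reducedMonomial_X_eq_top p).ge

end Basis

section Free

variable [Finite σ] {p : ℕ} [Fact p.Prime] [CharP K p]

instance free_mvPolynomial_pthPowers : Module.Free (pthPowers K σ p) (MvPolynomial σ K) :=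
  have := Fintype.ofFinite σ
  .of_basis (reducedMonomialBasis K σ p)

instance finite_mvPolynomial_pthPowers : Module.Finite (pthPowers K σ p) (MvPolynomial σ K) :=
  have := Fintype.ofFinite σ
  .of_basis (reducedMonomialBasis K σ p)

end Free

end PthPowers

section ConstantsOfPolynomials

variable {K σ ι : Type*} [CommRing K] {p : ℕ} [Fact p.Prime] [CharP K p]

/-- Multiplying `J * x` by `J ^ (p - 1)` replaces `J` by the scalar `J ^ p`. -/
lemma algebraMap_dvd_of_dvd_mul [Finite σ] {q : pthPowers K σ p} (hq : Prime q)
    {J x : MvPolynomial σ K}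
    (hJ : ¬ algebraMap _ (MvPolynomial σ K) q ∣ J ^ p)
    (h : algebraMap _ (MvPolynomial σ K) q ∣ J * x) :
    algebraMap _ (MvPolynomial σ K) q ∣ x := by
  set c : pthPowers K σ p := ⟨J ^ p, pow_mem_pthPowers J⟩
  have hc : ¬ q ∣ c := fun hqc ↦ hJ (map_dvd (algebraMap _ (MvPolynomial σ K)) hqc)
  have hcx : c • x = J ^ (p - 1) * (J * x) := by
    rw [Subalgebra.smul_def, smul_eq_mul, ← mul_assoc, pow_sub_one_mul (NeZero.ne p)]
  exact algebraMap_dvd_of_dvd_smul hq hc (hcx ▸ h.mul_left _)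

variable [IsDomain K] [Fintype ι] {f : ι → MvPolynomial σ K}

lemma mem_span_of_smul_mem_span_of_hasUnitDgcd [Finite σ] [DecidableEq ι]
    [UniqueFactorizationMonoid K] (hf : HasUnitDgcd f) {b : pthPowers K σ p} (hb : b ≠ 0)
    {g : MvPolynomial σ K}
    (hg : b • g ∈ Submodule.span (pthPowers K σ p) (Set.range (reducedMonomial p f))) :
    g ∈ Submodule.span (pthPowers K σ p) (Set.range (reducedMonomial p f)) := by
  refine mem_of_smul_mem_of_forall_prime (fun q hq x hx ↦ ?_) hb hg
  obtain ⟨j, hj⟩ := hf.exists_not_dvd_jacobianMinor_pow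
    (fun h ↦ hq.not_isUnit (isUnit_of_map_unit (algebraMap _ (MvPolynomial σ K)) q h))
    (by simpa using hq.ne_zero) p
  rw [← det_derivationOverPthPowers_pderiv (p := p)] at hj
  exact mem_span_of_smul_mem_span hq.ne_zero (fun x ↦ algebraMap_dvd_of_dvd_mul hq hj) hx

variable [Fintype σ]

lemma isTorsion_quotient_span_of_pIndependent
    (hf : PIndependent (pthPowers K σ p) p f) (hcard : Fintype.card ι = Fintype.card σ) :
    Module.IsTorsion (pthPowers K σ p)
      (MvPolynomial σ K ⧸ Submodule.span (pthPowers K σ p) (Set.range (reducedMonomial p f))) := by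
  classical
  refine isTorsion_quotient_span_of_linearIndependent hf.linearIndependent ?_
  rw [Module.finrank_eq_card_basis (reducedMonomialBasis K σ p)]
  simp [hcard]

variable [DecidableEq ι] {M : Type*} [AddCommGroup M] [Module K M] [Module (MvPolynomial σ K) M]
  [Module.IsTorsionFree (MvPolynomial σ K) M] {d : Derivation K (MvPolynomial σ K) M}

lemma exists_smul_mem_span_of_jacobianMinor_ne_zero
    (hcard : Fintype.card σ = Fintype.card ι + 1) (hd : d ≠ 0) (hdf : ∀ i, d (f i) = 0)
    {j : ι → σ} (hj : jacobianMinor f j ≠ 0) {g : MvPolynomial σ K} (hg : d g = 0) :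
    ∃ b : pthPowers K σ p, b ≠ 0 ∧
      b • g ∈ Submodule.span (pthPowers K σ p) (Set.range (reducedMonomial p f)) := by
  obtain ⟨l, hl⟩ : ∃ l, ∀ b, j b ≠ l := by
    by_contra! h
    have := Fintype.card_le_of_surjective j h
    omega
  have hind : PIndependent (pthPowers K σ p) p (Sum.elim f fun _ : Unit ↦ X l) :=
    pIndependent_of_jacobian_mem_nonZeroDivisors (j := Sum.elim j fun _ ↦ l)
      (mem_nonZeroDivisors_of_ne_zero (jacobianMinor_sumElim_X f hl ▸ hj))
  have := Module.IsTorsionFree.trans_faithfulSMul (pthPowers K σ p) (MvPolynomial σ K) M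
  have hd' : derivationOverPthPowers p d ≠ 0 :=
    fun h ↦ hd (Derivation.ext fun x ↦ DFunLike.congr_fun h x)
  exact exists_smul_mem_span_of_derivation_eq_zero hd' hdf hind
    (isTorsion_quotient_span_of_pIndependent hind (by simp [hcard])) hg

end ConstantsOfPolynomials

theorem p_basis_of_unit_dgcd_general {K σ ι M : Type*} [CommRing K] [IsDomain K]
    [UniqueFactorizationMonoid K] {p : ℕ} [Fact p.Prime] [CharP K p] [Fintype σ] [Fintype ι]
    [DecidableEq ι] [AddCommGroup M] [Module K M] [Module (MvPolynomial σ K) M]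
    [Module.IsTorsionFree (MvPolynomial σ K) M] {f : ι → MvPolynomial σ K}
    {d : Derivation K (MvPolynomial σ K) M}
    (hcard : Fintype.card σ = Fintype.card ι + 1) (hd : d ≠ 0) (hdf : ∀ i, d (f i) = 0)
    (hf : HasUnitDgcd f) :
    IsPBasis p f (LinearMap.ker (derivationOverPthPowers p d).toLinearMap) := by
  obtain ⟨j, hj⟩ := hf.exists_jacobianMinor_ne_zero
  refine ⟨(pIndependent_of_jacobian_mem_nonZeroDivisors
    (mem_nonZeroDivisors_of_ne_zero hj)).linearIndependent, le_antisymm ?_ ?_⟩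
  · exact fun g hg ↦
      derivation_apply_eq_zero_of_mem_span (d := derivationOverPthPowers p d) hdf hg
  · intro g hg
    obtain ⟨b, hb, hbg⟩ := exists_smul_mem_span_of_jacobianMinor_ne_zero hcard hd hdf hj hg
    exact mem_span_of_smul_mem_span_of_hasUnitDgcd hf hb hbg

/-- If `f₁,…,f_{n-1}` (`n = m + 1`) are constants of a nonzero
`K`-derivation `d` of `K[x₁,…,xₙ]` (`K` a UFD of characteristic `p > 0`) and
`dgcd(f₁,…,f_{n-1})` is a unit, then `f₁,…,f_{n-1}` form a `p`-basis of the ring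
of constants of `d` over `B = K[x₁^p,…,xₙ^p]`: the `p^{n-1}` products
`f₁^{e₁}⋯f_{n-1}^{e_{n-1}}` (`0 ≤ eᵢ < p`) are `B`-linearly independent and
`B`-span the ring of constants. -/
theorem p_basis_of_unit_dgcd
    {K : Type*} [CommRing K] [IsDomain K] [UniqueFactorizationMonoid K]
    (p : ℕ) [Fact p.Prime] [CharP K p] (m : ℕ)
    (d : Derivation K (MvPolynomial (Fin (m + 1)) K) (MvPolynomial (Fin (m + 1)) K))
    (hd : d ≠ 0)
    (f : Fin m → MvPolynomial (Fin (m + 1)) K)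
    (hdf : ∀ i, d (f i) = 0)
    (hdgcd : ∀ q : MvPolynomial (Fin (m + 1)) K,
      (∀ j : Fin m → Fin (m + 1),
        q ∣ Matrix.det (Matrix.of fun a b => pderiv (j b) (f a))) → IsUnit q) :
    LinearIndependent
      ↥(Algebra.adjoin K
          (Set.range fun i : Fin (m + 1) => (X i : MvPolynomial (Fin (m + 1)) K) ^ p))
      (fun e : Fin m → Fin p => ∏ i, f i ^ (e i : ℕ)) ∧
    ∀ g, d g = 0 →
      g ∈ Submodule.span
        ↥(Algebra.adjoin K
            (Set.range fun i : Fin (m + 1) => (X i : MvPolynomial (Fin (m + 1)) K) ^ p))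
        (Set.range fun e : Fin m → Fin p => ∏ i, f i ^ (e i : ℕ)) := by
  have h := p_basis_of_unit_dgcd_general (p := p) (by simp) hd hdf hdgcd
  exact ⟨h.linearIndependent, fun g hg ↦ h.span_eq.ge hg⟩
end

section
/- Let K be a unique factorization domain of characteristic p > 0 and let d be a K-derivation of K[x,y] with d(x), d(y) coprime (gcd(d(x), d(y)) a unit) and divergence d* = 0. Write d(x) = Σ_{0≤i,j<p} a_{ij} x^i y^j and d(y) = Σ_{0≤i,j<p} b_{ij} x^i y^j with a_{ij}, b_{ij} ∈ K[x^p, y^p]. Then K[x,y]^d = K[x^p, y^p] if and only if a_{0,p−1} ≠ 0 or b_{p−1,0} ≠ 0. -/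
open MvPolynomial

/-!
Put `f = d(x)`, `g = d(y)`, so that `∂f/∂x + ∂g/∂y = 0`. Since `(p - 1)! = -1`, we have
`∂^{p-1}f/∂y^{p-1} = -∑ᵢ a_{i,p-1} xⁱ`; its `x`-derivative is `-∂^p g/∂y^p = 0`, so only the term
`-a_{0,p-1}` survives. Likewise `∂^{p-1}g/∂x^{p-1} = -b_{p-1,0}`. If both vanish, then `f` and `g`
can be integrated and there is a potential `H` with `∂H/∂y = f` and `∂H/∂x = -g`: a constant
outside `K[x^p, y^p]`.

Conversely, if `q` is such a constant, then coprimality gives `∂q/∂x = -cg` and `∂q/∂y = cf`, and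
the equality of the mixed derivatives makes `c` a constant of smaller degree. By descent we may
take `c ∈ K[x^p, y^p]`, and then `c ∂^{p-1}f/∂y^{p-1} = ∂^p q/∂y^p = 0`, so that `a_{0,p-1} = 0`,
and similarly `b_{p-1,0} = 0`.
-/

section Slice

variable {K R : Type*} [CommRing K] [CommRing R] [Algebra K R] {D : Derivation K R R} {x : R}

theorem iterate_derivation_const_mul {c : R} (hc : D c = 0) (n : ℕ) (q : R) :
    D^[n] (c * q) = c * D^[n] q :=
  Function.Commute.iterate_left (g := (c * ·)) (fun q => by simp [hc]) n q

theorem iterate_derivation_sum {ι : Type*} (s : Finset ι) (q : ι → R) (n : ℕ) :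
    D^[n] (∑ i ∈ s, q i) = ∑ i ∈ s, D^[n] (q i) := by
  simpa only [Module.End.pow_apply] using! map_sum ((D : R →ₗ[K] R) ^ n) q s

theorem iterate_derivation_slice_pow (hx : D x = 1) (m n : ℕ) :
    D^[n] (x ^ m) = m.descFactorial n * x ^ (m - n) := by
  induction n with
  | zero => simp
  | succ n ih =>
    rw [Function.iterate_succ_apply', ih, Derivation.leibniz, Derivation.leibniz_pow,
      D.map_natCast, hx, Nat.descFactorial_succ, Nat.sub_sub]
    simp only [smul_eq_mul, nsmul_eq_mul, mul_one, mul_zero, add_zero, Nat.cast_mul]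
    ring

theorem iterate_derivation_sum_slice (hx : D x = 1) {c : ℕ → R} (hc : ∀ m, D (c m) = 0) (n : ℕ) :
    D^[n] (∑ m ∈ Finset.range (n + 1), c m * x ^ m) = n.factorial * c n := by
  simp only [iterate_derivation_sum, iterate_derivation_const_mul (hc _),
    iterate_derivation_slice_pow hx]
  rw [Finset.sum_range_succ, Finset.sum_eq_zero fun m hm => by
    simp [Nat.descFactorial_of_lt (Finset.mem_range.1 hm)], Nat.descFactorial_self]
  simp [mul_comm]

variable (p : ℕ) [hp : Fact p.Prime] [CharP R p]

theorem natCast_factorial_pred_eq_neg_one : ((p - 1).factorial : R) = -1 := by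
  have h := congrArg (ZMod.castHom (dvd_refl p) R) (ZMod.wilsons_lemma p)
  rwa [map_natCast, map_neg, map_one] at h

theorem sum_slice_eq_of_derivation_eq_zero (hx : D x = 1) {c : ℕ → R} (hc : ∀ m, D (c m) = 0)
    {n : ℕ} (hn : n < p) (hD : D (∑ m ∈ Finset.range (n + 1), c m * x ^ m) = 0) :
    ∑ m ∈ Finset.range (n + 1), c m * x ^ m = c 0 := by
  induction n with
  | zero => simp
  | succ n ih =>
    have hlead : c (n + 1) = 0 := by
      have h := iterate_derivation_sum_slice hx hc (n + 1)
      rw [Function.iterate_succ_apply, hD, iterate_map_zero] at h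
      exact ((IsUnit.natCast_factorial_iff_of_charP p).2 hn).mul_right_eq_zero.1 h.symm
    rw [Finset.sum_range_succ, hlead, zero_mul, add_zero] at hD ⊢
    exact ih (by omega) hD

theorem exists_derivation_eq_of_iterate_eq_zero {E : Derivation K R R}
    (hDE : Function.Commute D E) (hx : D x = 1) (hEx : E x = 0) {n : ℕ} (hn : n < p) {q : R}
    (hq : D^[n] q = 0) (hEq : E q = 0) : ∃ F, D F = q ∧ E F = 0 := by
  induction n generalizing q with
  | zero => exact ⟨0, by rw [map_zero]; exact hq.symm, map_zero E⟩
  | succ n ih =>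
    obtain ⟨u, hu⟩ := ((IsUnit.natCast_factorial_iff_of_charP (A := R) p).2 hn).exists_left_inv
    have derivation_u (δ : Derivation K R R) : δ u = 0 := by
      rw [δ.leibniz_of_mul_eq_one hu, δ.map_natCast, smul_zero]
    have hDc : D (D^[n] q) = 0 := by rw [← Function.iterate_succ_apply' D, hq]
    have hEc : E (D^[n] q) = 0 := by rw [← (hDE.iterate_left n).eq, hEq, iterate_map_zero]
    -- `D^[n] q` is a `D`-constant, so `D^[n] q / (n + 1)! * x ^ (n + 1)` is the top term of `F`.
    set F₁ := u * D^[n] q * x ^ (n + 1) with hF₁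
    have hEF₁ : E F₁ = 0 := by simp [hF₁, derivation_u, hEc, hEx]
    have hDF₁ : D^[n] (D F₁) = D^[n] q := by
      rw [← Function.iterate_succ_apply, hF₁,
        iterate_derivation_const_mul (by simp [derivation_u, hDc]),
        iterate_derivation_slice_pow hx, Nat.descFactorial_self, Nat.sub_self, pow_zero]
      linear_combination D^[n] q * hu
    obtain ⟨F₀, hDF₀, hEF₀⟩ := ih (q := q - D F₁) (by omega)
      (by rw [iterate_map_sub, hDF₁, sub_self])
      (by rw [map_sub, hEq, ← hDE.eq, hEF₁, map_zero, sub_zero])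
    exact ⟨F₀ + F₁, by rw [map_add, hDF₀, sub_add_cancel], by rw [map_add, hEF₀, hEF₁, add_zero]⟩

end Slice

section PartialDerivatives

variable {K σ : Type*} [CommRing K]

theorem coeff_iterate_pderiv (i : σ) (n : ℕ) (q : MvPolynomial σ K) (s : σ →₀ ℕ) :
    coeff s ((pderiv i)^[n] q) =
      coeff (s + Finsupp.single i n) q * (s i + n).descFactorial n := by
  induction n generalizing s with
  | zero => simp
  | succ n ih =>
    have hsucc : (s i + (n + 1)).descFactorial (n + 1) =
        (s i + 1) * (s i + 1 + n).descFactorial n := by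
      rw [show s i + (n + 1) = s i + 1 + n by omega, Nat.descFactorial_succ,
        Nat.add_sub_cancel_right]
    rw [Function.iterate_succ_apply', coeff_pderiv, ih, add_assoc, ← Finsupp.single_add,
      add_comm 1 n, hsucc, Finsupp.add_apply, Finsupp.single_eq_same]
    push_cast
    ring

theorem commute_pderiv (i j : σ) :
    Function.Commute (pderiv i : MvPolynomial σ K → _) (pderiv j) := by
  classical
  have hcomm : ⁅(pderiv i : Derivation K (MvPolynomial σ K) _), pderiv j⁆ = 0 :=
    derivation_ext fun k => by
      rw [Derivation.commutator_apply, pderiv_X, pderiv_X, Pi.single_apply, Pi.single_apply]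
      split_ifs <;> simp
  intro q
  simpa [Derivation.commutator_apply, sub_eq_zero] using Derivation.congr_fun hcomm q

theorem derivation_eq_sum_pderiv [Fintype σ]
    (D : Derivation K (MvPolynomial σ K) (MvPolynomial σ K)) (q : MvPolynomial σ K) :
    D q = ∑ i, D (X i) * pderiv i q := by
  classical
  have hcoe (q : MvPolynomial σ K) :
      (∑ i, D (X i) • pderiv i : Derivation K (MvPolynomial σ K) (MvPolynomial σ K)) q =
        ∑ i, D (X i) * pderiv i q := by
    have h := map_sum (Derivation.coeFnAddMonoidHom (R := K) (A := MvPolynomial σ K)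
      (M := MvPolynomial σ K)) (fun i => D (X i) • pderiv i) Finset.univ
    exact (congrFun h q).trans (by simp)
  have hD : D = ∑ i, D (X i) • pderiv i := derivation_ext fun k => by
    simp [hcoe, pderiv_X, Pi.single_apply]
  rw [← hcoe, ← hD]

theorem totalDegree_pderiv_lt_s7 {i : σ} {q : MvPolynomial σ K} (hq : pderiv i q ≠ 0) :
    (pderiv i q).totalDegree < q.totalDegree := by
  classical
  obtain ⟨s, hs, hdeg⟩ := (pderiv i q).support.exists_mem_eq_sup
    (support_nonempty.2 hq) fun s => s.sum fun _ e => e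
  have hmem : s + Finsupp.single i 1 ∈ q.support := by
    rw [mem_support_iff, coeff_pderiv] at hs
    exact mem_support_iff.2 (left_ne_zero_of_mul hs)
  have h := le_totalDegree hmem
  rw [Finsupp.sum_add_index' (fun _ => rfl) (fun _ _ _ => rfl), Finsupp.sum_single_index rfl] at h
  rw [totalDegree, hdeg]
  omega

end PartialDerivatives

section Cofactor

theorem exists_cofactor_of_mul_add_mul_eq_zero {R : Type*} [CommRing R] [NoZeroDivisors R]
    [DecompositionMonoid R] {f g a b : R} (hfg : IsRelPrime f g) (h : f * a + g * b = 0) :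
    ∃ c, a = -(c * g) ∧ b = c * f := by
  obtain ⟨c, rfl⟩ : f ∣ b := hfg.dvd_of_dvd_mul_left ⟨-a, by linear_combination h⟩
  rcases eq_or_ne f 0 with rfl | hf
  · obtain ⟨v, hv⟩ := (isRelPrime_zero_left.1 hfg).exists_left_inv
    exact ⟨-(a * v), by linear_combination -a * hv, by ring⟩
  · exact ⟨c, mul_left_cancel₀ hf (by linear_combination h), mul_comm f c⟩

variable {K σ : Type*} [CommRing K] [IsDomain K] [DecompositionMonoid (MvPolynomial σ K)]
  {i j : σ} {f g : MvPolynomial σ K}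

theorem exists_cofactor_of_constant (hcop : IsRelPrime f g) (hdiv : pderiv i f + pderiv j g = 0)
    {q : MvPolynomial σ K} (hq : f * pderiv i q + g * pderiv j q = 0) :
    ∃ c, pderiv i q = -(c * g) ∧ pderiv j q = c * f ∧ f * pderiv i c + g * pderiv j c = 0 := by
  obtain ⟨c, hqi, hqj⟩ := exists_cofactor_of_mul_add_mul_eq_zero hcop hq
  refine ⟨c, hqi, hqj, ?_⟩
  have hmixed := commute_pderiv i j q
  rw [hqi, hqj, map_neg, Derivation.leibniz, Derivation.leibniz] at hmixed
  simp only [smul_eq_mul] at hmixed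
  linear_combination hmixed - c * hdiv

theorem exists_constant_with_trivial_cofactor (hcop : IsRelPrime f g)
    (hdiv : pderiv i f + pderiv j g = 0) {q : MvPolynomial σ K}
    (hq : f * pderiv i q + g * pderiv j q = 0) (hne : pderiv i q ≠ 0 ∨ pderiv j q ≠ 0) :
    ∃ r c, c ≠ 0 ∧ pderiv i c = 0 ∧ pderiv j c = 0 ∧
      pderiv i r = -(c * g) ∧ pderiv j r = c * f := by
  induction hn : q.totalDegree using Nat.strong_induction_on generalizing q with
  | _ n ih =>
    obtain ⟨c, hqi, hqj, hc⟩ := exists_cofactor_of_constant hcop hdiv hq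
    have hc_ne : c ≠ 0 := by
      rintro rfl
      simp [hqi, hqj] at hne
    have hdeg : c.totalDegree < q.totalDegree := by
      rcases hne with h | h
      · have hlt := totalDegree_pderiv_lt_s7 h
        have hg : g ≠ 0 := by rintro rfl; simp [hqi] at h
        rw [hqi, totalDegree_neg, totalDegree_mul_of_isDomain hc_ne hg] at hlt
        omega
      · have hlt := totalDegree_pderiv_lt_s7 h
        have hf : f ≠ 0 := by rintro rfl; simp [hqj] at h
        rw [hqj, totalDegree_mul_of_isDomain hc_ne hf] at hlt
        omega
    by_cases htriv : pderiv i c ≠ 0 ∨ pderiv j c ≠ 0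
    · exact ih _ (hn ▸ hdeg) hc htriv rfl
    · push Not at htriv
      exact ⟨q, c, hc_ne, htriv.1, htriv.2, hqi, hqj⟩

end Cofactor

section PositiveCharacteristic

variable {K σ : Type*} [CommRing K] (p : ℕ) [CharP K p]

theorem mem_adjoin_X_pow_iff [NoZeroDivisors K] {q : MvPolynomial σ K} :
    q ∈ Algebra.adjoin K (Set.range fun i : σ => (X i ^ p : MvPolynomial σ K)) ↔
      ∀ i, pderiv i q = 0 := by
  constructor
  · intro hq i
    have h : Set.EqOn (pderiv i) (0 : Derivation K (MvPolynomial σ K) (MvPolynomial σ K))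
        (Set.range fun i : σ => (X i ^ p : MvPolynomial σ K)) := by
      rintro _ ⟨j, rfl⟩
      simp
    exact Derivation.eqOn_adjoin h hq
  · intro hq
    rw [q.as_sum]
    refine Subalgebra.sum_mem _ fun s hs => ?_
    rw [monomial_eq]
    refine Subalgebra.mul_mem _ (Subalgebra.algebraMap_mem _ _)
      (Subalgebra.prod_mem _ fun i hi => ?_)
    obtain ⟨m, hm⟩ : p ∣ s i := by
      have hle : Finsupp.single i 1 ≤ s :=
        Finsupp.single_le_iff.2 (Nat.pos_of_ne_zero (Finsupp.mem_support_iff.1 hi))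
      have hcoeff : coeff s q * (s i : K) = 0 := by
        obtain ⟨t, rfl⟩ := exists_add_of_le hle
        simpa [hq i, add_comm] using (coeff_pderiv q t (i := i)).symm
      rw [← CharP.cast_eq_zero_iff K p]
      exact (mul_eq_zero.1 hcoeff).resolve_left (mem_support_iff.1 hs)
    change X i ^ s i ∈ _
    rw [hm, pow_mul]
    exact Subalgebra.pow_mem _ (Algebra.subset_adjoin (Set.mem_range_self i)) m

theorem mem_adjoin_X_pow_pair_iff [NoZeroDivisors K] {q : MvPolynomial (Fin 2) K} :
    q ∈ Algebra.adjoin K ({X 0 ^ p, X 1 ^ p} : Set (MvPolynomial (Fin 2) K)) ↔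
      pderiv 0 q = 0 ∧ pderiv 1 q = 0 := by
  have hrange : ({X 0 ^ p, X 1 ^ p} : Set (MvPolynomial (Fin 2) K)) =
      Set.range fun i => X i ^ p := by
    ext
    simp [Fin.exists_fin_two, eq_comm]
  rw [hrange, mem_adjoin_X_pow_iff, Fin.forall_fin_two]

variable [hp : Fact p.Prime]

theorem iterate_pderiv_char_eq_zero (i : σ) (q : MvPolynomial σ K) : (pderiv i)^[p] q = 0 := by
  ext s
  have hp_dvd : p ∣ (s i + p).descFactorial p :=
    (Nat.dvd_factorial hp.out.pos le_rfl).trans (Nat.factorial_dvd_descFactorial _ _)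
  rw [coeff_iterate_pderiv, (CharP.cast_eq_zero_iff K p _).2 hp_dvd, mul_zero, coeff_zero]

theorem iterate_pderiv_pred_pderiv (i : σ) (q : MvPolynomial σ K) :
    (pderiv i)^[p - 1] (pderiv i q) = 0 := by
  rw [← Function.iterate_succ_apply, Nat.succ_eq_add_one, Nat.sub_add_cancel hp.out.pos,
    iterate_pderiv_char_eq_zero]

theorem exists_potential {i j : σ} (hij : i ≠ j) {f g : MvPolynomial σ K}
    (hdiv : pderiv i f + pderiv j g = 0) (hf : (pderiv j)^[p - 1] f = 0)
    (hg : (pderiv i)^[p - 1] g = 0) : ∃ H, pderiv j H = f ∧ pderiv i H = -g := by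
  have hp1 : p - 1 < p := Nat.sub_one_lt hp.out.ne_zero
  obtain ⟨F, hF, -⟩ := exists_derivation_eq_of_iterate_eq_zero p (E := 0)
    (fun _ => by simp) (pderiv_X_self j) (by simp) hp1 hf (by simp)
  have hdeficit : (pderiv i)^[p - 1] (g + pderiv i F) = 0 := by
    rw [iterate_map_add, hg, iterate_pderiv_pred_pderiv, zero_add]
  have hconst : pderiv j (g + pderiv i F) = 0 := by
    rw [map_add, commute_pderiv j i, hF, add_comm, hdiv]
  obtain ⟨G, hGi, hGj⟩ := exists_derivation_eq_of_iterate_eq_zero p (commute_pderiv i j)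
    (pderiv_X_self i) (pderiv_X_of_ne hij) hp1 hdeficit hconst
  exact ⟨F - G, by rw [map_sub, hF, hGj, sub_zero], by rw [map_sub, hGi]; ring⟩

theorem iterate_pderiv_pred_eq_zero_of_mul_eq_pderiv [NoZeroDivisors K] {j : σ}
    {c f r : MvPolynomial σ K} (hc : c ≠ 0) (hcj : pderiv j c = 0) (h : c * f = pderiv j r) :
    (pderiv j)^[p - 1] f = 0 := by
  refine (mul_eq_zero.1 ?_).resolve_left hc
  rw [← iterate_derivation_const_mul hcj, h, iterate_pderiv_pred_pderiv]

theorem constants_trivial_iff_iterate_pderiv_ne_zero [IsDomain K]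
    [DecompositionMonoid (MvPolynomial σ K)] {i j : σ} {f g : MvPolynomial σ K} (hij : i ≠ j)
    (hcop : IsRelPrime f g) (hdiv : pderiv i f + pderiv j g = 0) :
    (∀ q, f * pderiv i q + g * pderiv j q = 0 ↔ pderiv i q = 0 ∧ pderiv j q = 0) ↔
      (pderiv j)^[p - 1] f ≠ 0 ∨ (pderiv i)^[p - 1] g ≠ 0 := by
  constructor
  · intro htriv
    by_contra! hzero
    obtain ⟨H, hHj, hHi⟩ := exists_potential p hij hdiv hzero.1 hzero.2
    obtain ⟨hi, hj⟩ := (htriv H).1 (by rw [hHi, hHj]; ring)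
    rw [hHi, neg_eq_zero] at hi
    rw [hHj] at hj
    exact not_isRelPrime_zero_zero (hj ▸ hi ▸ hcop)
  · refine fun hne q => ⟨fun hq => ?_, fun ⟨hi, hj⟩ => by simp [hi, hj]⟩
    by_contra hnontriv
    obtain ⟨r, c, hc, hci, hcj, hri, hrj⟩ :=
      exists_constant_with_trivial_cofactor hcop hdiv hq (by tauto)
    have hf := iterate_pderiv_pred_eq_zero_of_mul_eq_pderiv p hc hcj hrj.symm
    have hg := iterate_pderiv_pred_eq_zero_of_mul_eq_pderiv p hc hci (f := g) (r := -r)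
      (by rw [map_neg, hri, neg_neg])
    exact hne.elim (absurd hf) (absurd hg)

theorem iterate_pderiv_pred_eq_neg_coeff {i j : σ} (hij : i ≠ j) {f g : MvPolynomial σ K}
    (hdiv : pderiv i f + pderiv j g = 0) {a : ℕ → ℕ → MvPolynomial σ K}
    (hai : ∀ m n, pderiv i (a m n) = 0) (haj : ∀ m n, pderiv j (a m n) = 0)
    (hf : f = ∑ m ∈ Finset.range p, ∑ n ∈ Finset.range p, a m n * X i ^ m * X j ^ n) :
    (pderiv j)^[p - 1] f = -a 0 (p - 1) := by
  have hp1 : p - 1 + 1 = p := Nat.sub_add_cancel hp.out.pos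
  have hXij : pderiv j (X i : MvPolynomial σ K) = 0 := pderiv_X_of_ne hij
  have hXj : pderiv j (X j : MvPolynomial σ K) = 1 := pderiv_X_self j
  have hXi : pderiv i (X i : MvPolynomial σ K) = 1 := pderiv_X_self i
  have hexpand : (pderiv j)^[p - 1] f =
      ∑ m ∈ Finset.range (p - 1 + 1), -a m (p - 1) * X i ^ m := by
    have hcoeff (n : ℕ) :
        pderiv j (∑ m ∈ Finset.range p, a m n * X i ^ m) = 0 := by simp [haj, hXij]
    have hslice : f = ∑ n ∈ Finset.range (p - 1 + 1),
        (∑ m ∈ Finset.range p, a m n * X i ^ m) * X j ^ n := by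
      rw [hf, Finset.sum_comm, hp1]
      simp only [Finset.sum_mul]
    rw [hslice, iterate_derivation_sum_slice hXj hcoeff, natCast_factorial_pred_eq_neg_one, hp1]
    simp only [neg_mul, one_mul, Finset.sum_neg_distrib]
  have hconst : pderiv i ((pderiv j)^[p - 1] f) = 0 := by
    rw [← ((commute_pderiv j i).iterate_left (p - 1)).eq, eq_neg_of_add_eq_zero_left hdiv,
      iterate_map_neg, iterate_pderiv_pred_pderiv, neg_zero]
  rw [hexpand] at hconst ⊢
  exact sum_slice_eq_of_derivation_eq_zero p hXi (by simp [hai])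
    (Nat.sub_one_lt hp.out.ne_zero) hconst

end PositiveCharacteristic

theorem lemma2b_trivial_constants_criterion_general
    {K : Type*} [CommRing K] [IsDomain K]
    [DecompositionMonoid (MvPolynomial (Fin 2) K)]
    (p : ℕ) [Fact p.Prime] [CharP K p]
    (d : Derivation K (MvPolynomial (Fin 2) K) (MvPolynomial (Fin 2) K))
    (hcop : IsRelPrime (d (X 0)) (d (X 1)))
    (hdiv : pderiv (0 : Fin 2) (d (X 0)) + pderiv (1 : Fin 2) (d (X 1)) = 0)
    (a b : ℕ → ℕ → MvPolynomial (Fin 2) K)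
    (ha : ∀ i j, a i j ∈ Algebra.adjoin K ({X 0 ^ p, X 1 ^ p} : Set (MvPolynomial (Fin 2) K)))
    (hb : ∀ i j, b i j ∈ Algebra.adjoin K ({X 0 ^ p, X 1 ^ p} : Set (MvPolynomial (Fin 2) K)))
    (hdx : d (X 0) = ∑ i ∈ Finset.range p, ∑ j ∈ Finset.range p, a i j * X 0 ^ i * X 1 ^ j)
    (hdy : d (X 1) = ∑ i ∈ Finset.range p, ∑ j ∈ Finset.range p, b i j * X 0 ^ i * X 1 ^ j) :
    (∀ q : MvPolynomial (Fin 2) K,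
        d q = 0 ↔ q ∈ Algebra.adjoin K ({X 0 ^ p, X 1 ^ p} : Set (MvPolynomial (Fin 2) K))) ↔
      (a 0 (p - 1) ≠ 0 ∨ b (p - 1) 0 ≠ 0) := by
  simp only [mem_adjoin_X_pow_pair_iff] at ha hb
  have hα : (pderiv 1)^[p - 1] (d (X 0)) = -a 0 (p - 1) :=
    iterate_pderiv_pred_eq_neg_coeff p zero_ne_one hdiv (fun m n => (ha m n).1)
      (fun m n => (ha m n).2) hdx
  have hβ : (pderiv 0)^[p - 1] (d (X 1)) = -b (p - 1) 0 :=
    iterate_pderiv_pred_eq_neg_coeff p one_ne_zero ((add_comm _ _).trans hdiv)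
      (a := fun m n => b n m) (fun m n => (hb n m).2) (fun m n => (hb n m).1)
      (by rw [hdy, Finset.sum_comm]; simp only [mul_right_comm])
  have htriv := constants_trivial_iff_iterate_pderiv_ne_zero p zero_ne_one hcop hdiv
  rw [hα, hβ, neg_ne_zero, neg_ne_zero] at htriv
  rw [← htriv]
  refine forall_congr' fun q => ?_
  rw [derivation_eq_sum_pderiv d q, Fin.sum_univ_two, mem_adjoin_X_pow_pair_iff]

/-- Lemma 2 b).  `K` a UFD of characteristic `p > 0`, `d` a
`K`-derivation of `K[x,y]` with `d(x), d(y)` coprime and divergence `d* = 0`,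
and `d(x) = Σ a_{ij} x^i y^j`, `d(y) = Σ b_{ij} x^i y^j` with coefficients in
`K[x^p,y^p]`.  Then `K[x,y]^d = K[x^p,y^p]` iff `a_{0,p-1} ≠ 0` or `b_{p-1,0} ≠ 0`. -/
theorem lemma2b_trivial_constants_criterion
    {K : Type*} [CommRing K] [IsDomain K] [UniqueFactorizationMonoid K]
    (p : ℕ) [Fact p.Prime] [CharP K p]
    (d : Derivation K (MvPolynomial (Fin 2) K) (MvPolynomial (Fin 2) K))
    (hcop : ∀ q : MvPolynomial (Fin 2) K, q ∣ d (X 0) → q ∣ d (X 1) → IsUnit q)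
    (hdiv : pderiv (0 : Fin 2) (d (X 0)) + pderiv (1 : Fin 2) (d (X 1)) = 0)
    (a b : ℕ → ℕ → MvPolynomial (Fin 2) K)
    (ha : ∀ i j, a i j ∈ Algebra.adjoin K ({X 0 ^ p, X 1 ^ p} : Set (MvPolynomial (Fin 2) K)))
    (hb : ∀ i j, b i j ∈ Algebra.adjoin K ({X 0 ^ p, X 1 ^ p} : Set (MvPolynomial (Fin 2) K)))
    (hdx : d (X 0) = ∑ i ∈ Finset.range p, ∑ j ∈ Finset.range p, a i j * X 0 ^ i * X 1 ^ j)
    (hdy : d (X 1) = ∑ i ∈ Finset.range p, ∑ j ∈ Finset.range p, b i j * X 0 ^ i * X 1 ^ j) :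
    (∀ q : MvPolynomial (Fin 2) K,
        d q = 0 ↔ q ∈ Algebra.adjoin K ({X 0 ^ p, X 1 ^ p} : Set (MvPolynomial (Fin 2) K))) ↔
      (a 0 (p - 1) ≠ 0 ∨ b (p - 1) 0 ≠ 0) :=
  lemma2b_trivial_constants_criterion_general p d (fun _ => hcop _) hdiv a b ha hb hdx hdy
end
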